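/- arXiv:2101.05660 — 3 statements merged into one kernel-verified Lean document; each statement's English description precedes it below -/
import Mathlib

section
/- Let φ : ℝⁿ → (0,∞) be a radial, radially decreasing, lower semicontinuous measurable function with ∫_{ℝⁿ} φ dm = 1 that satisfies the comparison condition sup{ φ_t(x)/φ(x) : t ∈ (0,1), ‖x‖ > 1 } < ∞. Let μ be a locally finite complex (or signed) Borel measure on ℝⁿ such that (|μ| ∗ φ_{t₀})(x₁) < ∞ for some t₀ > 0 and x₁ ∈ ℝⁿ. If x₀ ∈ ℝⁿ is a σ-point of μ with D_σμ(x₀) = L ∈ ℂ, then the convolution integral φ[μ] has nontangential limit L at x₀, i.e. for every α > 0, φ[μ](x,t) → L as (x,t) → (x₀,0) with (x,t) ∈ S(x₀,α). -/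
open MeasureTheory Metric Filter
open scoped ENNReal Topology NNReal

noncomputable section

abbrev Eu (n : ℕ) := EuclideanSpace ℝ (Fin n)

/-- The dilated kernel `φ_t(x) = t^{-n} φ(x/t)`. -/
def dil (n : ℕ) (φ : Eu n → ℝ) (t : ℝ) (x : Eu n) : ℝ := (t ^ n)⁻¹ * φ (t⁻¹ • x)

/-- radial and radially decreasing -/
def RadialDecr {n : ℕ} (φ : Eu n → ℝ) : Prop := ∀ x y : Eu n, ‖x‖ ≤ ‖y‖ → φ y ≤ φ x

/-- comparison condition -/
def CompCond (n : ℕ) (φ : Eu n → ℝ) : Prop :=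
  ∃ C : ℝ, ∀ t ∈ Set.Ioo (0:ℝ) 1, ∀ x : Eu n, 1 < ‖x‖ → dil n φ t x ≤ C * φ x

/-- σ-point of the measure dμ = f dν, with D_σ μ(x₀) = L -/
def IsSigmaPt (n : ℕ) (ν : Measure (Eu n)) (f : Eu n → ℂ) (x₀ : Eu n) (L : ℂ) : Prop :=
  ∀ ε > 0, ∃ δ > 0, ∀ (x : Eu n) (r : ℝ), 0 < r → dist x x₀ < δ → r < δ →
    ‖(∫ ξ in ball x r, f ξ ∂ν) - L * ((volume (ball x r)).toReal : ℂ)‖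
      < ε * (dist x x₀ + r) ^ n

/-- convolution integral φ[μ](x,t) -/
def convInt (n : ℕ) (ν : Measure (Eu n)) (f : Eu n → ℂ) (φ : Eu n → ℝ) (x : Eu n) (t : ℝ) : ℂ :=
  ∫ ξ, (dil n φ t (x - ξ) : ℂ) * f ξ ∂ν

/-- nontangential limit L at x₀ -/
def NTlim (n : ℕ) (u : Eu n → ℝ → ℂ) (x₀ : Eu n) (L : ℂ) : Prop :=
  ∀ α > 0, Tendsto (fun p : Eu n × ℝ => u p.1 p.2)
    (𝓝[{p : Eu n × ℝ | 0 < p.2 ∧ dist p.1 x₀ < α * p.2}] (x₀, 0)) (𝓝 L)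

/-!
Split `φ[μ](x, t) - L = φ[μ - L • m](x, t)` at a small ball `B(x, ρ)`. By the layer cake formula the
integral over this ball is an integral of `(μ - L • m)(s)` over the superlevel sets `s` of
`ξ ↦ φ_t(x - ξ)`, and these are balls centred at `x`, open or closed; a closed ball is the limit of
the larger concentric open ones. At a σ-point each contributes at most
`ε (‖x - x₀‖ + r)ⁿ ≤ ε 2ⁿ⁻¹ ((α t)ⁿ + rⁿ)` when `‖x - x₀‖ < α t`. The first term is integrated over
levels in `(0, t⁻ⁿ φ(0)]`, the second is proportional to the volume of `s` and integrates to at most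
`∫ φ_t = 1`, so the total error is `O(ε)` with a constant depending only on `α`, `φ(0)` and `n`.

The rest is dominated convergence: `‖x‖ⁿ φ(x) → 0` at infinity makes `φ_t(x - ξ) → 0` uniformly for
`‖x - ξ‖ ≥ ρ`, and the comparison condition bounds `φ_t(x - ξ)` for large `ξ` by a multiple of
`φ_{t₀}(x₁ - ξ)`, since `‖x - ξ‖ ≥ ‖x₁ - ξ‖ / 2` and halving the argument amounts to doubling `t`.
-/

section RadialFunctions

variable {X : Type*} [PseudoMetricSpace X] {x : X} {ρ : ℝ}

theorem measurable_of_forall_le_imp_ge {α : Type*} [MeasurableSpace α] {g φ : α → ℝ}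
    (hg : Measurable g) (hφ : ∀ a b, g a ≤ g b → φ b ≤ φ a) : Measurable φ := by
  refine measurable_of_Ioi fun l => ?_
  set I : Set ℝ := {r | ∃ b, l < φ b ∧ r ≤ g b}
  have hI : IsLowerSet I := fun _ _ hsr ⟨b, hb, hr⟩ => ⟨b, hb, hsr.trans hr⟩
  have hpre : φ ⁻¹' Set.Ioi l = g ⁻¹' I :=
    Set.ext fun a => ⟨fun ha => ⟨a, ha, le_rfl⟩, fun ⟨b, hb, hab⟩ => hb.trans_le (hφ a b hab)⟩
  exact hpre ▸ hg hI.ordConnected.measurableSet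

theorem eq_ball_or_eq_closedBall_of_dist_le {s : Set X} (hs : s.Nonempty) (hsρ : s ⊆ ball x ρ)
    (hdist : ∀ y ∈ s, ∀ z, dist z x ≤ dist y x → z ∈ s) :
    (∃ r, 0 < r ∧ r ≤ ρ ∧ s = ball x r) ∨ ∃ r, r < ρ ∧ s = closedBall x r := by
  set r := sSup ((dist · x) '' s)
  have hle : ∀ y ∈ s, dist y x ≤ r := fun y hy =>
    le_csSup ⟨ρ, Set.forall_mem_image.2 fun z hz => (hsρ hz).le⟩ (Set.mem_image_of_mem _ hy)
  by_cases hmax : ∃ y ∈ s, dist y x = r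
  · obtain ⟨y, hy, hyr⟩ := hmax
    exact Or.inr ⟨r, hyr ▸ hsρ hy, Set.Subset.antisymm hle fun z hz => hdist y hy z (hyr ▸ hz)⟩
  · push Not at hmax
    have hlt : ∀ y ∈ s, dist y x < r := fun y hy => (hle y hy).lt_of_ne (hmax y hy)
    obtain ⟨y, hy⟩ := hs
    refine Or.inl ⟨r, dist_nonneg.trans_lt (hlt y hy),
      csSup_le ⟨_, Set.mem_image_of_mem _ hy⟩ (Set.forall_mem_image.2 fun z hz => (hsρ hz).le),
      Set.Subset.antisymm hlt fun z hz => ?_⟩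
    obtain ⟨_, ⟨w, hw, rfl⟩, hzw⟩ :=
      exists_lt_of_lt_csSup ⟨_, Set.mem_image_of_mem _ hy⟩ (mem_ball.1 hz)
    exact hdist w hw z hzw.le

end RadialFunctions

section LayerCake

variable {α F : Type*} [MeasurableSpace α] [NormedAddCommGroup F] {μ : Measure α} {D : α → ℝ}
  {f : α → F}

theorem integrable_uncurry_indicator_Iio (hD : Measurable D) (hf : Integrable f μ) (M : ℝ) :
    Integrable (Function.uncurry fun a l => (Set.Iio (D a)).indicator (fun _ => f a) l)
      (μ.prod (volume.restrict (Set.Ioc 0 M))) :=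
  (hf.comp_fst _).indicator (measurableSet_lt measurable_snd (hD.comp measurable_fst))

variable [NormedSpace ℝ F]

theorem integral_indicator_Iio_eq_setIntegral (hD : Measurable D) (l : ℝ) :
    ∫ a, (Set.Iio (D a)).indicator (fun _ => f a) l ∂μ = ∫ a in {a | l < D a}, f a ∂μ :=
  integral_indicator (f := f) (measurableSet_lt measurable_const hD)

variable [SFinite μ]

theorem integrableOn_setIntegral_lt (hD : Measurable D) (hf : Integrable f μ) (M : ℝ) :
    IntegrableOn (fun l => ∫ a in {a | l < D a}, f a ∂μ) (Set.Ioc 0 M) := by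
  simpa only [IntegrableOn, Function.uncurry_apply_pair, integral_indicator_Iio_eq_setIntegral hD]
    using (integrable_uncurry_indicator_Iio hD hf M).integral_prod_right

theorem integral_smul_eq_integral_setIntegral_lt [CompleteSpace F] (hD : Measurable D)
    (hD0 : ∀ a, 0 ≤ D a) {M : ℝ} (hDM : ∀ a, D a ≤ M) (hf : Integrable f μ) :
    ∫ a, D a • f a ∂μ = ∫ l in Set.Ioc 0 M, ∫ a in {a | l < D a}, f a ∂μ := by
  have hslice (a : α) :
      ∫ l in Set.Ioc 0 M, (Set.Iio (D a)).indicator (fun _ => f a) l = D a • f a := by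
    have hIoo : Set.Iio (D a) ∩ Set.Ioc 0 M = Set.Ioo 0 (D a) :=
      Set.ext fun l => ⟨fun h => ⟨h.2.1, h.1⟩, fun h => ⟨h.2, h.1, h.2.le.trans (hDM a)⟩⟩
    rw [integral_indicator measurableSet_Iio, Measure.restrict_restrict measurableSet_Iio, hIoo,
      setIntegral_const, Real.volume_real_Ioo_of_le (hD0 a), sub_zero]
  simpa only [hslice, integral_indicator_Iio_eq_setIntegral hD] using
    integral_integral_swap (integrable_uncurry_indicator_Iio hD hf M)

end LayerCake

section BallComparison

variable {X F : Type*} [PseudoMetricSpace X] [MeasurableSpace X] [BorelSpace X]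
  [NormedAddCommGroup F] [NormedSpace ℝ F] {ν κ : Measure X} {f : X → F} {L : F} {x : X}
  {ρ A B : ℝ}

theorem tendsto_setIntegral_ball_nhdsGT {r : ℝ} (hr : r < ρ) (hf : IntegrableOn f (ball x ρ) ν) :
    Tendsto (fun s => ∫ y in ball x s, f y ∂ν) (𝓝[>] r) (𝓝 (∫ y in closedBall x r, f y ∂ν)) := by
  have hsρ : ∀ᶠ s in 𝓝[>] r, s < ρ := mem_nhdsWithin_of_mem_nhds (Iio_mem_nhds hr)
  simp only [← integral_indicator measurableSet_ball, ← integral_indicator measurableSet_closedBall]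
  refine tendsto_integral_filter_of_dominated_convergence ((ball x ρ).indicator (‖f ·‖)) ?_ ?_
    (IntegrableOn.integrable_indicator hf.norm measurableSet_ball)
    (Eventually.of_forall fun y => ?_)
  · filter_upwards [hsρ] with s hs
    exact ((hf.mono_set (ball_subset_ball hs.le)).integrable_indicator
      measurableSet_ball).aestronglyMeasurable
  · filter_upwards [hsρ] with s hs
    refine Eventually.of_forall fun y => ?_
    rw [norm_indicator_eq_indicator_norm]
    exact Set.indicator_le_indicator_of_subset (ball_subset_ball hs.le) (fun _ => norm_nonneg _) y
  · refine tendsto_const_nhds.congr' ?_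
    by_cases hy : dist y x ≤ r
    · filter_upwards [self_mem_nhdsWithin] with s hs
      rw [Set.indicator_of_mem (mem_closedBall.2 hy),
        Set.indicator_of_mem (mem_ball.2 (hy.trans_lt hs))]
    · filter_upwards [mem_nhdsWithin_of_mem_nhds (Iio_mem_nhds (not_le.1 hy))] with s hs
      rw [Set.indicator_of_notMem (by simpa using hy),
        Set.indicator_of_notMem (by simpa using (Set.mem_Iio.1 hs).le)]

theorem norm_setIntegral_sub_le_of_forall_ball {s : Set X} (hsρ : s ⊆ ball x ρ)
    (hdist : ∀ y ∈ s, ∀ z, dist z x ≤ dist y x → z ∈ s)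
    (hf : IntegrableOn f (ball x ρ) ν) (hκ : κ (ball x ρ) ≠ ∞) (hA : 0 ≤ A)
    (hball : ∀ r, 0 < r → r ≤ ρ →
      ‖(∫ y in ball x r, f y ∂ν) - κ.real (ball x r) • L‖ ≤ A + B * κ.real (ball x r)) :
    ‖(∫ y in s, f y ∂ν) - κ.real s • L‖ ≤ A + B * κ.real s := by
  rcases s.eq_empty_or_nonempty with rfl | hs
  · simpa using hA
  rcases eq_ball_or_eq_closedBall_of_dist_le hs hsρ hdist with ⟨r, hr, hrρ, rfl⟩ | ⟨r, hrρ, rfl⟩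
  · exact hball r hr hrρ
  have hr : 0 ≤ r := nonempty_closedBall.1 hs
  have hf_lim := tendsto_setIntegral_ball_nhdsGT hrρ hf
  have hκ_lim : Tendsto (fun s => κ.real (ball x s)) (𝓝[>] r) (𝓝 (κ.real (closedBall x r))) := by
    simpa using tendsto_setIntegral_ball_nhdsGT hrρ (integrableOn_const hκ (C := (1 : ℝ)))
  refine le_of_tendsto_of_tendsto (hf_lim.sub (hκ_lim.smul_const L)).norm
    ((hκ_lim.const_mul B).const_add A) ?_
  filter_upwards [self_mem_nhdsWithin, mem_nhdsWithin_of_mem_nhds (Iio_mem_nhds hrρ)] with s hs hsρ'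
  exact hball s (hr.trans_lt hs) hsρ'.le

theorem norm_setIntegral_smul_sub_le_of_forall_ball [CompleteSpace F] [SFinite ν] [SFinite κ]
    {D : X → ℝ} (hD0 : ∀ y, 0 ≤ D y) (hD : ∀ y z, dist y x ≤ dist z x → D z ≤ D y)
    (hf : IntegrableOn f (ball x ρ) ν) (hκ : κ (ball x ρ) ≠ ∞) (hA : 0 ≤ A)
    (hball : ∀ r, 0 < r → r ≤ ρ →
      ‖(∫ y in ball x r, f y ∂ν) - κ.real (ball x r) • L‖ ≤ A + B * κ.real (ball x r)) :
    ‖(∫ y in ball x ρ, D y • f y ∂ν) - ∫ y in ball x ρ, D y • L ∂κ‖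
      ≤ A * D x + B * ∫ y in ball x ρ, D y ∂κ := by
  have hDm : Measurable D :=
    measurable_of_forall_le_imp_ge (continuous_id.dist continuous_const).measurable hD
  have hDx : ∀ y, D y ≤ D x := fun y => hD x y (by simp)
  set s : ℝ → Set X := fun l => {y | l < D y} ∩ ball x ρ
  have hs (l : ℝ) (τ : Measure X) : (τ.restrict (ball x ρ)).restrict {y | l < D y}
      = τ.restrict (s l) :=
    Measure.restrict_restrict (measurableSet_lt measurable_const hDm)
  have hL : IntegrableOn (fun _ => L) (ball x ρ) κ := integrableOn_const hκ
  have hone : IntegrableOn (fun _ => (1 : ℝ)) (ball x ρ) κ := integrableOn_const hκ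
  have hf_int := integrableOn_setIntegral_lt hDm hf (D x)
  have hL_int := integrableOn_setIntegral_lt hDm hL (D x)
  have hκ_int := integrableOn_setIntegral_lt hDm hone (D x)
  have hD_eq := integral_smul_eq_integral_setIntegral_lt hDm hD0 hDx hone
  rw [integral_smul_eq_integral_setIntegral_lt hDm hD0 hDx hf,
    integral_smul_eq_integral_setIntegral_lt hDm hD0 hDx hL, ← integral_sub hf_int hL_int]
  simp only [hs, setIntegral_const, smul_eq_mul, mul_one] at hD_eq hκ_int ⊢
  have hlevel (l : ℝ) : ‖(∫ y in s l, f y ∂ν) - κ.real (s l) • L‖ ≤ A + B * κ.real (s l) :=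
    norm_setIntegral_sub_le_of_forall_ball Set.inter_subset_right
      (fun y hy z hz => ⟨hy.1.trans_le (hD z y hz), hz.trans_lt hy.2⟩) hf hκ hA hball
  calc _ ≤ ∫ l in Set.Ioc 0 (D x), (A + B * κ.real (s l)) :=
        norm_integral_le_of_norm_le ((integrable_const A).add (hκ_int.const_mul B))
          (Eventually.of_forall hlevel)
    _ = A * D x + B * ∫ y in ball x ρ, D y ∂κ := by
        rw [integral_add (integrable_const A) (hκ_int.const_mul B), integral_const_mul, ← hD_eq,
          setIntegral_const, Real.volume_real_Ioc_of_le (hD0 x), sub_zero, smul_eq_mul, mul_comm A]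

end BallComparison

section Decay

theorem measureReal_ball_pos {X : Type*} [PseudoMetricSpace X] [ProperSpace X] [MeasurableSpace X]
    (μ : Measure X) [μ.IsOpenPosMeasure] [IsFiniteMeasureOnCompacts μ] (x : X) {r : ℝ}
    (hr : 0 < r) : 0 < μ.real (ball x r) :=
  ENNReal.toReal_pos (measure_ball_pos μ x hr).ne' measure_ball_lt_top.ne

variable {E : Type*} [NormedAddCommGroup E] [NormedSpace ℝ E]

-- A ball of radius comparable to `‖x‖` on which a radially decreasing function is at least its
-- value at `x`, and which escapes every bounded set as `x` does.
theorem ball_three_quarters_smul_subset (x : E) :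
    ball ((3 / 4 : ℝ) • x) (‖x‖ / 4) ⊆ {y | ‖x‖ / 2 ≤ ‖y‖ ∧ ‖y‖ ≤ ‖x‖} := by
  intro y hy
  rw [mem_ball, dist_eq_norm] at hy
  have hnorm : ‖(3 / 4 : ℝ) • x‖ = 3 / 4 * ‖x‖ := by rw [norm_smul]; norm_num
  have hupper := norm_sub_norm_le y ((3 / 4 : ℝ) • x)
  have hlower := norm_sub_norm_le ((3 / 4 : ℝ) • x) y
  rw [norm_sub_rev] at hlower
  constructor <;> linarith

variable [MeasurableSpace E] [BorelSpace E] {φ : E → ℝ}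

theorem tendsto_setIntegral_ball_three_quarters_smul_cobounded {μ : Measure E}
    (hφ : Integrable φ μ) :
    Tendsto (fun x : E => ∫ y in ball ((3 / 4 : ℝ) • x) (‖x‖ / 4), φ y ∂μ)
      (Bornology.cobounded E) (𝓝 0) := by
  simp only [← integral_indicator measurableSet_ball]
  rw [← integral_zero E ℝ (μ := μ), ← comap_norm_atTop]
  refine tendsto_integral_filter_of_dominated_convergence (‖φ ·‖)
    (Eventually.of_forall fun x => hφ.aestronglyMeasurable.indicator measurableSet_ball)
    (Eventually.of_forall fun x => Eventually.of_forall fun y => norm_indicator_le_norm_self φ y)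
    hφ.norm (Eventually.of_forall fun y => tendsto_const_nhds.congr' ?_)
  filter_upwards [tendsto_comap.eventually_gt_atTop (2 * ‖y‖)] with x hx
  refine (Set.indicator_of_notMem (fun hy => ?_) φ).symm
  linarith [(ball_three_quarters_smul_subset x hy).1]

variable [FiniteDimensional ℝ E] (μ : Measure E) [μ.IsAddHaarMeasure]

theorem measureReal_ball_of_pos (x : E) {r : ℝ} (hr : 0 < r) :
    μ.real (ball x r) = r ^ Module.finrank ℝ E * μ.real (ball 0 1) := by
  rw [measureReal_def, Measure.addHaar_ball_of_pos μ x hr, ENNReal.toReal_mul,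
    ENNReal.toReal_ofReal (by positivity), measureReal_def]

variable {μ}

theorem tendsto_norm_pow_finrank_mul_cobounded (hφ0 : ∀ x, 0 ≤ φ x)
    (hφanti : ∀ x y, ‖x‖ ≤ ‖y‖ → φ y ≤ φ x) (hφ : Integrable φ μ) :
    Tendsto (fun x => ‖x‖ ^ Module.finrank ℝ E * φ x) (Bornology.cobounded E) (𝓝 0) := by
  set d := Module.finrank ℝ E
  set c := (4 : ℝ) ^ d / μ.real (ball 0 1)
  have hω : 0 < μ.real (ball (0 : E) 1) := measureReal_ball_pos μ 0 one_pos
  have hlim := (tendsto_setIntegral_ball_three_quarters_smul_cobounded hφ).const_mul c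
  rw [mul_zero] at hlim
  refine squeeze_zero' (Eventually.of_forall fun x => mul_nonneg (by positivity) (hφ0 x)) ?_ hlim
  filter_upwards [tendsto_norm_cobounded_atTop.eventually_gt_atTop 0] with x hx
  have hφx : φ x * μ.real (ball ((3 / 4 : ℝ) • x) (‖x‖ / 4))
      ≤ ∫ y in ball ((3 / 4 : ℝ) • x) (‖x‖ / 4), φ y ∂μ :=
    setIntegral_ge_of_const_le_real measurableSet_ball measure_ball_lt_top.ne
      (fun y hy => hφanti y x (ball_three_quarters_smul_subset x hy).2) hφ.integrableOn
  calc ‖x‖ ^ d * φ x = c * (φ x * μ.real (ball ((3 / 4 : ℝ) • x) (‖x‖ / 4))) := by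
        rw [measureReal_ball_of_pos μ _ (by positivity), div_pow]
        simp only [c, d]
        field_simp
    _ ≤ _ := by gcongr

end Decay

section Dilation

variable {n : ℕ} {φ : Eu n → ℝ} {s t : ℝ} {x y : Eu n}

theorem RadialDecr.measurable (hφrad : RadialDecr φ) : Measurable φ :=
  measurable_of_forall_le_imp_ge measurable_norm hφrad

theorem dil_nonneg (hφ0 : ∀ x, 0 ≤ φ x) (ht : 0 < t) (x : Eu n) : 0 ≤ dil n φ t x :=
  mul_nonneg (by positivity) (hφ0 _)

theorem dil_le_dil_of_norm_le (hφrad : RadialDecr φ) (ht : 0 < t) (h : ‖x‖ ≤ ‖y‖) :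
    dil n φ t y ≤ dil n φ t x := by
  refine mul_le_mul_of_nonneg_left (hφrad _ _ ?_) (by positivity)
  rw [norm_smul, norm_smul]
  gcongr

theorem dil_eq_inv_pow_mul_dil_smul (φ : Eu n → ℝ) (hs : 0 < s) (t : ℝ) (x : Eu n) :
    dil n φ t x = (s ^ n)⁻¹ * dil n φ (t / s) (s⁻¹ • x) := by
  rw [dil, dil, smul_smul, ← mul_assoc, div_pow]
  congr 2
  · field_simp
  · congr 1; field_simp

theorem measurable_dil_sub (hφ : Measurable φ) (t : ℝ) (x : Eu n) :
    Measurable fun ξ => dil n φ t (x - ξ) :=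
  (hφ.comp (by fun_prop : Measurable fun ξ : Eu n => t⁻¹ • (x - ξ))).const_mul _

theorem integrable_dil_sub (hφ : Integrable φ) (ht : 0 < t) (x : Eu n) :
    Integrable fun ξ => dil n φ t (x - ξ) :=
  ((hφ.comp_smul (inv_ne_zero ht.ne')).comp_sub_left x).const_mul _

theorem integral_dil_sub (φ : Eu n → ℝ) (ht : 0 < t) (x : Eu n) :
    ∫ ξ, dil n φ t (x - ξ) = ∫ ξ, φ ξ := by
  rw [integral_sub_left_eq_self (dil n φ t) volume x]
  simp only [dil]
  rw [integral_const_mul, Measure.integral_comp_inv_smul_of_nonneg _ _ ht.le,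
    finrank_euclideanSpace_fin, smul_eq_mul, inv_mul_cancel_left₀ (by positivity)]

theorem eventually_dil_lt (hφ0 : ∀ x, 0 ≤ φ x) (hφrad : RadialDecr φ) (hφ : Integrable φ)
    {ρ ε : ℝ} (hρ : 0 < ρ) (hε : 0 < ε) :
    ∀ᶠ t in 𝓝[>] 0, ∀ x, ρ ≤ ‖x‖ → dil n φ t x < ε := by
  have hdecay := tendsto_norm_pow_finrank_mul_cobounded hφ0 hφrad hφ
  rw [finrank_euclideanSpace_fin] at hdecay
  obtain ⟨R, -, hR⟩ := hasBasis_cobounded_norm.eventually_iff.1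
    (hdecay.eventually_lt_const (show 0 < ε * ρ ^ n by positivity))
  filter_upwards [tendsto_inv_nhdsGT_zero.eventually_ge_atTop (R / ρ), self_mem_nhdsWithin]
    with t hRt (ht : 0 < t) x hx
  have hnorm : ‖t⁻¹ • x‖ = t⁻¹ * ‖x‖ := norm_smul_of_nonneg (by positivity) x
  have hfar : R ≤ ‖t⁻¹ • x‖ := hnorm ▸ ((div_le_iff₀ hρ).1 hRt).trans (by gcongr)
  have hlt : dil n φ t x * ‖x‖ ^ n < ε * ‖x‖ ^ n := calc
    dil n φ t x * ‖x‖ ^ n = ‖t⁻¹ • x‖ ^ n * φ (t⁻¹ • x) := by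
      rw [hnorm, dil, mul_pow, inv_pow]; ring
    _ < ε * ρ ^ n := hR hfar
    _ ≤ ε * ‖x‖ ^ n := by gcongr
  exact lt_of_mul_lt_mul_right hlt (by positivity)

theorem CompCond.exists_dil_le_mul_dil (hcomp : CompCond n φ) (hφ0 : ∀ x, 0 ≤ φ x) (hs : 0 < s) :
    ∃ C ≥ 0, ∀ t ∈ Set.Ioo 0 s, ∀ x, s < ‖x‖ → dil n φ t x ≤ C * dil n φ s x := by
  obtain ⟨C, hC⟩ := hcomp
  refine ⟨|C|, abs_nonneg C, fun t ht x hx => ?_⟩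
  have hts : t / s ∈ Set.Ioo (0 : ℝ) 1 := ⟨div_pos ht.1 hs, (div_lt_one hs).2 ht.2⟩
  have hsx : 1 < ‖s⁻¹ • x‖ := by
    rwa [norm_smul_of_nonneg (by positivity), inv_mul_eq_div, one_lt_div hs]
  calc dil n φ t x = (s ^ n)⁻¹ * dil n φ (t / s) (s⁻¹ • x) := dil_eq_inv_pow_mul_dil_smul φ hs t x
    _ ≤ (s ^ n)⁻¹ * (|C| * φ (s⁻¹ • x)) := by
        gcongr
        exact (hC _ hts _ hsx).trans (mul_le_mul_of_nonneg_right (le_abs_self C) (hφ0 _))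
    _ = |C| * dil n φ s x := by rw [dil]; ring

theorem CompCond.eventually_dil_sub_le (hcomp : CompCond n φ) (hφ0 : ∀ x, 0 ≤ φ x)
    (hφrad : RadialDecr φ) {t₀ : ℝ} (ht₀ : 0 < t₀) (x₀ x₁ : Eu n) :
    ∃ K ≥ 0, ∃ R, ∀ᶠ p in 𝓝 x₀ ×ˢ 𝓝[>] 0, ∀ ξ ∉ closedBall x₁ R,
      dil n φ p.2 (p.1 - ξ) ≤ K * dil n φ t₀ (x₁ - ξ) := by
  obtain ⟨C, hC0, hC⟩ := hcomp.exists_dil_le_mul_dil hφ0 ht₀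
  refine ⟨2 ^ n * C, by positivity, max t₀ (2 * (dist x₀ x₁ + 1)), ?_⟩
  have ht : ∀ᶠ t in 𝓝[>] (0 : ℝ), t ∈ Set.Ioo 0 (t₀ / 2) := Ioo_mem_nhdsGT (by positivity)
  filter_upwards [prod_mem_prod (ball_mem_nhds x₀ one_pos) ht]
    with ⟨x, t⟩ ⟨(hx : dist x x₀ < 1), ht0, htt₀⟩ ξ hξ
  obtain ⟨hξt₀, hξx₀⟩ := max_lt_iff.1 (not_le.1 (mem_closedBall.not.1 hξ))
  rw [dist_comm, dist_eq_norm] at hξt₀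
  have hnorm : ‖(2 : ℝ)⁻¹ • (x₁ - ξ)‖ ≤ ‖x - ξ‖ := by
    rw [norm_smul_of_nonneg (by positivity), ← dist_eq_norm, ← dist_eq_norm, dist_comm x₁,
      dist_comm x]
    linarith [dist_triangle4 ξ x x₀ x₁]
  calc dil n φ t (x - ξ) ≤ dil n φ t ((2 : ℝ)⁻¹ • (x₁ - ξ)) := dil_le_dil_of_norm_le hφrad ht0 hnorm
    _ = 2 ^ n * dil n φ (2 * t) (x₁ - ξ) := by
        rw [dil_eq_inv_pow_mul_dil_smul φ two_pos (2 * t), mul_inv_cancel_left₀ (by positivity),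
          mul_div_cancel_left₀ t two_ne_zero]
    _ ≤ 2 ^ n * (C * dil n φ t₀ (x₁ - ξ)) := by
        gcongr
        exact hC _ ⟨by positivity, by linarith⟩ _ hξt₀
    _ = 2 ^ n * C * dil n φ t₀ (x₁ - ξ) := (mul_assoc _ _ _).symm

theorem eventually_forall_compl_ball_dil_sub_lt (hφ0 : ∀ x, 0 ≤ φ x) (hφrad : RadialDecr φ)
    (hφ : Integrable φ) (x₀ : Eu n) {ρ ε : ℝ} (hρ : 0 < ρ) (hε : 0 < ε) :
    ∀ᶠ p in 𝓝 x₀ ×ˢ 𝓝[>] 0, ∀ ξ ∈ (ball p.1 ρ)ᶜ, dil n φ p.2 (p.1 - ξ) < ε := by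
  filter_upwards [tendsto_snd.eventually (eventually_dil_lt hφ0 hφrad hφ hρ hε)] with p hp ξ hξ
  exact hp _ (by simpa [← dist_eq_norm, dist_comm] using hξ)

theorem CompCond.eventually_forall_compl_ball_dil_sub_le (hcomp : CompCond n φ)
    (hφ0 : ∀ x, 0 ≤ φ x) (hφrad : RadialDecr φ) (hφ : Integrable φ) {t₀ : ℝ} (ht₀ : 0 < t₀)
    (x₀ x₁ : Eu n) {ρ : ℝ} (hρ : 0 < ρ) :
    ∃ K ≥ 0, ∃ R, ∀ᶠ p in 𝓝 x₀ ×ˢ 𝓝[>] 0, ∀ ξ ∈ (ball p.1 ρ)ᶜ, dil n φ p.2 (p.1 - ξ)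
      ≤ K * dil n φ t₀ (x₁ - ξ) + (closedBall x₁ R).indicator 1 ξ := by
  obtain ⟨K, hK, R, hKR⟩ := hcomp.eventually_dil_sub_le hφ0 hφrad ht₀ x₀ x₁
  refine ⟨K, hK, R, ?_⟩
  filter_upwards [hKR, eventually_forall_compl_ball_dil_sub_lt hφ0 hφrad hφ x₀ hρ one_pos]
    with p hfar hone ξ hξ
  by_cases hξR : ξ ∈ closedBall x₁ R
  · rw [Set.indicator_of_mem hξR]
    exact (hone ξ hξ).le.trans
      (le_add_of_nonneg_left (mul_nonneg hK (dil_nonneg hφ0 ht₀ _)))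
  · rw [Set.indicator_of_notMem hξR, add_zero]
    exact hfar ξ hξR

end Dilation

section Convolution

variable {n : ℕ} {φ : Eu n → ℝ} {ν : Measure (Eu n)} {f : Eu n → ℂ}

theorem norm_dil_sub_mul_le (hφ0 : ∀ x, 0 ≤ φ x) {c : ℝ} (hfc : ∀ ξ, ‖f ξ‖ ≤ c) {t : ℝ}
    (ht : 0 < t) (x ξ : Eu n) : ‖(dil n φ t (x - ξ) : ℂ) * f ξ‖ ≤ dil n φ t (x - ξ) * c := by
  rw [norm_mul, Complex.norm_of_nonneg (dil_nonneg hφ0 ht _)]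
  exact mul_le_mul_of_nonneg_left (hfc ξ) (dil_nonneg hφ0 ht _)

theorem convInt_volume_const (hφint : ∫ x, φ x = 1) (L : ℂ) (x : Eu n) {t : ℝ} (ht : 0 < t) :
    convInt n volume (fun _ => L) φ x t = L := by
  rw [convInt, integral_mul_const, integral_complex_ofReal, integral_dil_sub φ ht, hφint,
    Complex.ofReal_one, one_mul]

variable [IsLocallyFiniteMeasure ν]

theorem eventually_integrable_dil_sub (hφ0 : ∀ x, 0 ≤ φ x) (hφrad : RadialDecr φ)
    (hcomp : CompCond n φ) {t₀ : ℝ} (ht₀ : 0 < t₀) {x₁ : Eu n}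
    (hint : Integrable (fun ξ => dil n φ t₀ (x₁ - ξ)) ν) (x₀ : Eu n) :
    ∀ᶠ p in 𝓝 x₀ ×ˢ 𝓝[>] 0, Integrable (fun ξ => dil n φ p.2 (p.1 - ξ)) ν := by
  obtain ⟨K, -, R, hKR⟩ := hcomp.eventually_dil_sub_le hφ0 hφrad ht₀ x₀ x₁
  filter_upwards [hKR, prod_mem_prod univ_mem self_mem_nhdsWithin] with ⟨x, t⟩ hfar ⟨_, ht⟩
  have hmeas := (measurable_dil_sub hφrad.measurable t x).aestronglyMeasurable (μ := ν)
  have hnorm (ξ : Eu n) : ‖dil n φ t (x - ξ)‖ = dil n φ t (x - ξ) :=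
    Real.norm_of_nonneg (dil_nonneg hφ0 ht _)
  rw [← integrableOn_univ, ← Set.union_compl_self (closedBall x₁ R)]
  refine IntegrableOn.union ?_ ?_
  · refine Measure.integrableOn_of_bounded (isCompact_closedBall x₁ R).measure_lt_top.ne hmeas
      (M := dil n φ t 0) (Eventually.of_forall fun ξ => ?_)
    rw [hnorm]
    exact dil_le_dil_of_norm_le hφrad ht (by simp)
  · refine (hint.const_mul K).integrableOn.mono' hmeas.restrict ?_
    filter_upwards [ae_restrict_mem measurableSet_closedBall.compl] with ξ hξ
    exact (hnorm ξ).trans_le (hfar ξ hξ)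

theorem tendsto_setIntegral_compl_ball_dil_sub (hφ0 : ∀ x, 0 ≤ φ x) (hφrad : RadialDecr φ)
    (hφ : Integrable φ) (hcomp : CompCond n φ) {t₀ : ℝ} (ht₀ : 0 < t₀) {x₁ : Eu n}
    (hint : Integrable (fun ξ => dil n φ t₀ (x₁ - ξ)) ν) (x₀ : Eu n) {ρ : ℝ} (hρ : 0 < ρ) :
    Tendsto (fun p => ∫ ξ in (ball p.1 ρ)ᶜ, dil n φ p.2 (p.1 - ξ) ∂ν)
      (𝓝 x₀ ×ˢ 𝓝[>] 0) (𝓝 0) := by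
  obtain ⟨K, hK, R, hKR⟩ :=
    hcomp.eventually_forall_compl_ball_dil_sub_le hφ0 hφrad hφ ht₀ x₀ x₁ hρ
  have ht : ∀ᶠ p : Eu n × ℝ in 𝓝 x₀ ×ˢ 𝓝[>] 0, 0 < p.2 :=
    tendsto_snd.eventually self_mem_nhdsWithin
  have hcompact : Integrable ((closedBall x₁ R).indicator (1 : Eu n → ℝ)) ν :=
    (integrableOn_const (isCompact_closedBall x₁ R).measure_lt_top.ne).integrable_indicator
      measurableSet_closedBall
  suffices hlim : Tendsto
      (fun p => ∫ ξ, (ball p.1 ρ)ᶜ.indicator (fun ξ => dil n φ p.2 (p.1 - ξ)) ξ ∂ν)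
      (𝓝 x₀ ×ˢ 𝓝[>] 0) (𝓝 (∫ _, 0 ∂ν)) by
    simpa only [integral_zero, integral_indicator measurableSet_ball.compl] using hlim
  refine tendsto_integral_filter_of_dominated_convergence
    (fun ξ => K * dil n φ t₀ (x₁ - ξ) + (closedBall x₁ R).indicator 1 ξ) ?_ ?_
    ((hint.const_mul K).add hcompact) (Eventually.of_forall fun ξ => ?_)
  · exact Eventually.of_forall fun p => ((measurable_dil_sub hφrad.measurable p.2 p.1).indicator
      measurableSet_ball.compl).aestronglyMeasurable
  · filter_upwards [hKR, ht] with p hp ht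
    refine Eventually.of_forall fun ξ => ?_
    rw [norm_indicator_eq_indicator_norm]
    refine Set.indicator_apply_le' (fun hξ => ?_) fun _ => add_nonneg
      (mul_nonneg hK (dil_nonneg hφ0 ht₀ _)) (Set.indicator_nonneg (fun _ _ => zero_le_one) ξ)
    exact (Real.norm_of_nonneg (dil_nonneg hφ0 ht _)).trans_le (hp ξ hξ)
  · refine tendsto_order.2 ⟨fun a ha => ?_, fun ε hε => ?_⟩
    · filter_upwards [ht] with p ht
      exact ha.trans_le (Set.indicator_nonneg (fun _ _ => dil_nonneg hφ0 ht _) ξ)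
    · filter_upwards [eventually_forall_compl_ball_dil_sub_lt hφ0 hφrad hφ x₀ hρ hε] with p hp
      by_cases hξ : ξ ∈ (ball p.1 ρ)ᶜ
      · exact (Set.indicator_of_mem hξ _).trans_lt (hp ξ hξ)
      · exact (Set.indicator_of_notMem hξ _).trans_lt hε

theorem tendsto_convInt_sub_setIntegral_ball (hφ0 : ∀ x, 0 ≤ φ x) (hφrad : RadialDecr φ)
    (hφ : Integrable φ) (hcomp : CompCond n φ) {t₀ : ℝ} (ht₀ : 0 < t₀) {x₁ : Eu n}
    (hint : Integrable (fun ξ => dil n φ t₀ (x₁ - ξ)) ν) (hf : AEStronglyMeasurable f ν) {c : ℝ}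
    (hfc : ∀ ξ, ‖f ξ‖ ≤ c) (x₀ : Eu n) {ρ : ℝ} (hρ : 0 < ρ) :
    Tendsto (fun p => convInt n ν f φ p.1 p.2
        - ∫ ξ in ball p.1 ρ, (dil n φ p.2 (p.1 - ξ) : ℂ) * f ξ ∂ν)
      (𝓝 x₀ ×ˢ 𝓝[>] 0) (𝓝 0) := by
  have htail :=
    (tendsto_setIntegral_compl_ball_dil_sub hφ0 hφrad hφ hcomp ht₀ hint x₀ hρ).mul_const c
  rw [zero_mul] at htail
  refine squeeze_zero_norm' ?_ htail
  filter_upwards [eventually_integrable_dil_sub hφ0 hφrad hcomp ht₀ hint x₀,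
    prod_mem_prod univ_mem self_mem_nhdsWithin] with ⟨x, t⟩ hdil ⟨_, ht⟩
  have hprod : Integrable (fun ξ => (dil n φ t (x - ξ) : ℂ) * f ξ) ν :=
    hdil.ofReal.mul_bdd hf (Eventually.of_forall hfc)
  rw [convInt, ← setIntegral_compl₀ measurableSet_ball.nullMeasurableSet hprod,
    ← integral_mul_const]
  exact norm_integral_le_of_norm_le (hdil.mul_const c).integrableOn
    (Eventually.of_forall (norm_dil_sub_mul_le hφ0 hfc ht x))

-- `L` is itself the convolution integral of `L • m`, so the far part of the latter vanishes too.
theorem tendsto_convInt_sub_const_sub_setIntegral_ball (hφ0 : ∀ x, 0 ≤ φ x)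
    (hφrad : RadialDecr φ) (hφint : ∫ x, φ x = 1) (hcomp : CompCond n φ) {t₀ : ℝ} (ht₀ : 0 < t₀)
    {x₁ : Eu n} (hint : Integrable (fun ξ => dil n φ t₀ (x₁ - ξ)) ν)
    (hf : AEStronglyMeasurable f ν) {c : ℝ} (hfc : ∀ ξ, ‖f ξ‖ ≤ c) (x₀ : Eu n) (L : ℂ) {ρ : ℝ}
    (hρ : 0 < ρ) :
    Tendsto (fun p => (convInt n ν f φ p.1 p.2 - L)
        - ((∫ ξ in ball p.1 ρ, (dil n φ p.2 (p.1 - ξ) : ℂ) * f ξ ∂ν)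
          - ∫ ξ in ball p.1 ρ, (dil n φ p.2 (p.1 - ξ) : ℂ) * L))
      (𝓝 x₀ ×ˢ 𝓝[>] 0) (𝓝 0) := by
  have hφ : Integrable φ := integrable_of_integral_eq_one hφint
  have hfar := tendsto_convInt_sub_setIntegral_ball hφ0 hφrad hφ hcomp ht₀ hint hf hfc x₀ hρ
  have hfar_const := tendsto_convInt_sub_setIntegral_ball hφ0 hφrad hφ hcomp ht₀
    (integrable_dil_sub hφ ht₀ x₁) aestronglyMeasurable_const (fun _ => le_refl ‖L‖) x₀ hρ
  refine (sub_zero (0 : ℂ) ▸ hfar.sub hfar_const).congr' ?_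
  filter_upwards [prod_mem_prod univ_mem self_mem_nhdsWithin] with ⟨x, t⟩ ⟨_, ht⟩
  rw [convInt_volume_const hφint L x ht, sub_sub_sub_comm]

end Convolution

section NontangentialLimit

/-- The cone `S(x₀, α)` of aperture `α` with vertex `x₀`. -/
def cone {n : ℕ} (x₀ : Eu n) (α : ℝ) : Set (Eu n × ℝ) :=
  {p | 0 < p.2 ∧ dist p.1 x₀ < α * p.2}

theorem nhdsWithin_cone_le {n : ℕ} (x₀ : Eu n) (α : ℝ) :
    𝓝[cone x₀ α] (x₀, 0) ≤ 𝓝 x₀ ×ˢ 𝓝[>] 0 := by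
  rw [← nhdsWithin_univ, ← nhdsWithin_prod_eq]
  exact nhdsWithin_mono _ fun p hp => ⟨trivial, hp.1⟩

variable {n : ℕ} {φ : Eu n → ℝ} {ν : Measure (Eu n)} [IsLocallyFiniteMeasure ν] {f : Eu n → ℂ}
  {x₀ : Eu n} {L : ℂ}

theorem dist_add_pow_le_of_mem_cone {x : Eu n} {α t r : ℝ} (hxt : (x, t) ∈ cone x₀ α)
    (hr : 0 < r) :
    (dist x x₀ + r) ^ n ≤ 2 ^ (n - 1) * (α * t) ^ n
      + 2 ^ (n - 1) * (volume.real (ball (0 : Eu n) 1))⁻¹ * volume.real (ball x r) := by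
  have hx : dist x x₀ < α * t := hxt.2
  have hω := measureReal_ball_pos volume (0 : Eu n) one_pos
  rw [measureReal_ball_of_pos volume x hr, finrank_euclideanSpace_fin]
  calc (dist x x₀ + r) ^ n ≤ (α * t + r) ^ n := by gcongr
    _ ≤ 2 ^ (n - 1) * ((α * t) ^ n + r ^ n) := add_pow_le (dist_nonneg.trans hx.le) hr.le n
    _ = _ := by field_simp

theorem norm_setIntegral_ball_dil_sub_le (hφ0 : ∀ x, 0 ≤ φ x) (hφrad : RadialDecr φ)
    (hφint : ∫ x, φ x = 1) (hf : LocallyIntegrable f ν) {x : Eu n} {ρ α t ε : ℝ}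
    (hε : 0 ≤ ε) (hxt : (x, t) ∈ cone x₀ α)
    (hball : ∀ r, 0 < r → r ≤ ρ →
      ‖(∫ ξ in ball x r, f ξ ∂ν) - L * (volume.real (ball x r) : ℂ)‖
        ≤ ε * (dist x x₀ + r) ^ n) :
    ‖(∫ ξ in ball x ρ, (dil n φ t (x - ξ) : ℂ) * f ξ ∂ν)
        - ∫ ξ in ball x ρ, (dil n φ t (x - ξ) : ℂ) * L‖
      ≤ ε * (2 ^ (n - 1) * (α ^ n * φ 0 + (volume.real (ball (0 : Eu n) 1))⁻¹)) := by
  have ht : 0 < t := hxt.1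
  have hαt : 0 < α * t := dist_nonneg.trans_lt hxt.2
  set ω := volume.real (ball (0 : Eu n) 1)
  set A := ε * (2 ^ (n - 1) * (α * t) ^ n)
  set B := ε * (2 ^ (n - 1) * ω⁻¹)
  have hballAB (r : ℝ) (hr : 0 < r) (hrρ : r ≤ ρ) :
      ‖(∫ ξ in ball x r, f ξ ∂ν) - volume.real (ball x r) • L‖
        ≤ A + B * volume.real (ball x r) := by
    rw [Complex.real_smul, mul_comm]
    calc _ ≤ ε * (dist x x₀ + r) ^ n := hball r hr hrρ
      _ ≤ ε * _ := mul_le_mul_of_nonneg_left (dist_add_pow_le_of_mem_cone hxt hr) hε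
      _ = A + B * volume.real (ball x r) := by ring
  have hdil_anti (y z : Eu n) (hyz : dist y x ≤ dist z x) :
      dil n φ t (x - z) ≤ dil n φ t (x - y) :=
    dil_le_dil_of_norm_le hφrad ht (by rwa [← dist_eq_norm', ← dist_eq_norm'])
  have hmass : ∫ ξ in ball x ρ, dil n φ t (x - ξ) ≤ 1 :=
    hφint ▸ integral_dil_sub φ ht x ▸ setIntegral_le_integral
      (integrable_dil_sub (integrable_of_integral_eq_one hφint) ht x)
      (Eventually.of_forall fun ξ => dil_nonneg hφ0 ht _)
  have hcompare := norm_setIntegral_smul_sub_le_of_forall_ball (fun y => dil_nonneg hφ0 ht (x - y))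
    hdil_anti ((hf.integrableOn_isCompact (isCompact_closedBall x ρ)).mono_set
      ball_subset_closedBall) measure_ball_lt_top.ne (by positivity) hballAB
  simp only [Complex.real_smul] at hcompare
  calc _ ≤ A * dil n φ t (x - x) + B * ∫ ξ in ball x ρ, dil n φ t (x - ξ) := hcompare
    _ ≤ A * dil n φ t (x - x) + B * 1 := by gcongr
    _ = _ := by
      rw [sub_self, dil, smul_zero]
      simp only [A, B, mul_pow]
      field_simp

theorem IsSigmaPt.exists_eventually_norm_sub_le (hσ : IsSigmaPt n ν f x₀ L) (hφ0 : ∀ x, 0 ≤ φ x)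
    (hφrad : RadialDecr φ) (hφint : ∫ x, φ x = 1) (hf : LocallyIntegrable f ν) {α η : ℝ}
    (hα : 0 < α) (hη : 0 < η) :
    ∃ ρ > 0, ∀ᶠ p in 𝓝[cone x₀ α] (x₀, 0),
      ‖(∫ ξ in ball p.1 ρ, (dil n φ p.2 (p.1 - ξ) : ℂ) * f ξ ∂ν)
        - ∫ ξ in ball p.1 ρ, (dil n φ p.2 (p.1 - ξ) : ℂ) * L‖ ≤ η := by
  set Q := 2 ^ (n - 1) * (α ^ n * φ 0 + (volume.real (ball (0 : Eu n) 1))⁻¹)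
  have hω := measureReal_ball_pos volume (0 : Eu n) one_pos
  have hQ : 0 < Q := by have := hφ0 0; positivity
  obtain ⟨δ, hδ, hδball⟩ := hσ (η / Q) (by positivity)
  have hdist : ∀ᶠ p in 𝓝[cone x₀ α] (x₀, 0), dist p.1 x₀ < δ :=
    (tendsto_fst.mono_left (nhdsWithin_cone_le x₀ α)).eventually (ball_mem_nhds x₀ hδ)
  refine ⟨δ / 2, by positivity, ?_⟩
  filter_upwards [hdist, self_mem_nhdsWithin] with p hp hcone
  refine (norm_setIntegral_ball_dil_sub_le hφ0 hφrad hφint hf (by positivity) hcone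
    fun r hr hrδ => (hδball p.1 r hr hp (by linarith)).le).trans_eq ?_
  exact div_mul_cancel₀ η hQ.ne'

end NontangentialLimit

theorem stmt0_general {n : ℕ} (φ : Eu n → ℝ) (hφ0 : ∀ x, 0 ≤ φ x) (hφrad : RadialDecr φ)
    (hφint : ∫ x, φ x = 1) (hcomp : CompCond n φ)
    (ν : Measure (Eu n)) [IsLocallyFiniteMeasure ν]
    (f : Eu n → ℂ) (hf : Measurable f) (hf1 : ∀ ξ, ‖f ξ‖ = 1)
    (t₀ : ℝ) (ht₀ : 0 < t₀) (x₁ : Eu n)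
    (hfin : ∫⁻ ξ, ENNReal.ofReal (dil n φ t₀ (x₁ - ξ)) ∂ν < ⊤)
    (x₀ : Eu n) (L : ℂ) (hσ : IsSigmaPt n ν f x₀ L) :
    NTlim n (fun x t => convInt n ν f φ x t) x₀ L := by
  intro α hα
  change Tendsto _ (𝓝[cone x₀ α] (x₀, 0)) _
  have hν : Integrable (fun ξ => dil n φ t₀ (x₁ - ξ)) ν :=
    (lintegral_ofReal_ne_top_iff_integrable
      (measurable_dil_sub hφrad.measurable t₀ x₁).aestronglyMeasurable
      (Eventually.of_forall fun ξ => dil_nonneg hφ0 ht₀ _)).1 hfin.ne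
  have hfloc : LocallyIntegrable f ν := (locallyIntegrable_const (1 : ℝ)).mono
    hf.aestronglyMeasurable (Eventually.of_forall fun ξ => by simp [hf1])
  refine Metric.tendsto_nhds.2 fun ε hε => ?_
  obtain ⟨ρ, hρ, hnear⟩ :=
    hσ.exists_eventually_norm_sub_le hφ0 hφrad hφint hfloc hα (half_pos hε)
  have hfar := (tendsto_convInt_sub_const_sub_setIntegral_ball hφ0 hφrad hφint hcomp ht₀ hν
    hf.aestronglyMeasurable (fun ξ => (hf1 ξ).le) x₀ L hρ).norm.mono_left (nhdsWithin_cone_le x₀ α)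
  rw [norm_zero] at hfar
  filter_upwards [hnear, hfar.eventually_lt_const (half_pos hε)] with p hnear hfar
  rw [dist_eq_norm]
  exact (norm_le_norm_add_norm_sub' _ _).trans_lt
    ((add_lt_add_of_le_of_lt hnear hfar).trans_eq (add_halves ε))

theorem stmt0 {n : ℕ} (hn : 0 < n) (φ : Eu n → ℝ)
    (hφpos : ∀ x, 0 < φ x) (hφmeas : Measurable φ)
    (hφrad : RadialDecr φ) (hφlsc : LowerSemicontinuous φ)
    (hφint : ∫ x, φ x = 1)
    (hcomp : CompCond n φ)
    (ν : Measure (Eu n)) [IsLocallyFiniteMeasure ν]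
    (f : Eu n → ℂ) (hf : Measurable f) (hf1 : ∀ ξ, ‖f ξ‖ = 1)
    (t₀ : ℝ) (ht₀ : 0 < t₀) (x₁ : Eu n)
    (hfin : ∫⁻ ξ, ENNReal.ofReal (dil n φ t₀ (x₁ - ξ)) ∂ν < ⊤)
    (x₀ : Eu n) (L : ℂ) (hσ : IsSigmaPt n ν f x₀ L) :
    NTlim n (fun x t => convInt n ν f φ x t) x₀ L :=
  stmt0_general φ (fun x => (hφpos x).le) hφrad hφint hcomp ν f hf hf1 t₀ ht₀ x₁ hfin x₀ L hσ

end
end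

section
/- Let φ : ℝⁿ → [0,∞) be a radial, radially decreasing, lower semicontinuous function with ∫_{ℝⁿ} φ dm = 1. Let μ be a locally finite complex (or signed) Borel measure on ℝⁿ such that |μ|(B(0,r)) = O(rⁿ) as r → ∞ and such that (μ ∗ φ_{t₀})(x₁) exists (is finite) for some x₁ ∈ ℝⁿ and t₀ ∈ (0,∞). If x₀ ∈ ℝⁿ is a σ-point of μ with D_σμ(x₀) = L ∈ ℂ, then φ[μ] has nontangential limit L at x₀. -/
open MeasureTheory Metric Filter
open scoped ENNReal Topology NNReal

noncomputable section

/-!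
The superlevel sets `{φ > s}` are balls `B(0, R(s))`, so by Fubini `φ[μ](x, t)` is the integral over
`0 < s < φ(0)` of `t⁻ⁿ μ(B(x, t R(s)))`. At a σ-point these integrands converge, inside a cone, to
`L m(B(0, R(s)))`, whose integral is `L ∫ φ dm`. The convergence is dominated by a multiple of
`(α + R(s))ⁿ`: small balls are controlled by the σ-point condition and large ones by the growth of
`|μ|`, and `R(s)ⁿ` is integrable because `φ` is.
-/

open Module (finrank)

section RadiallyDecreasing

variable {E : Type*} [NormedAddCommGroup E]

/-- The analogue of `RadialDecr` on an arbitrary normed group. -/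
def IsRadiallyDecreasing (φ : E → ℝ) : Prop := ∀ x y : E, ‖x‖ ≤ ‖y‖ → φ y ≤ φ x

/-- The radius of the superlevel set `{y | s < φ y}` of a radially decreasing function `φ`, encoded
as the distance from the origin to its complement. It takes the value `0` when that complement is
empty. -/
def superlevelRadius (φ : E → ℝ) (s : ℝ) : ℝ := infDist 0 {y | φ y ≤ s}

variable {φ : E → ℝ} {s : ℝ}

lemma lt_iff_norm_lt_superlevelRadius [ProperSpace E] (hφ : IsRadiallyDecreasing φ)
    (hlsc : LowerSemicontinuous φ) (hs : {y | φ y ≤ s}.Nonempty) (y : E) :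
    s < φ y ↔ ‖y‖ < superlevelRadius φ s := by
  obtain ⟨z, hz, hzdist⟩ := (hlsc.isClosed_preimage s).exists_infDist_eq_dist hs 0
  have hradius : superlevelRadius φ s = ‖z‖ := hzdist.trans (dist_zero_left z)
  constructor
  · intro hy
    rw [hradius]
    by_contra! hzy
    exact (hy.trans_le (hφ z y hzy)).not_ge hz
  · intro hy
    by_contra! hys
    have hle : superlevelRadius φ s ≤ dist 0 y := infDist_le_dist_of_mem hys
    exact (hy.trans_le hle).ne (dist_zero_left y).symm

lemma antitoneOn_superlevelRadius : AntitoneOn (superlevelRadius φ) {s | {y | φ y ≤ s}.Nonempty} :=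
  fun _ hs _ _ hst => infDist_le_infDist_of_subset (fun _ hy => le_trans hy hst) hs

end RadiallyDecreasing

lemma integrableOn_measureReal_lt {X : Type*} [MeasurableSpace X] {μ : Measure X} {g : X → ℝ}
    (hg : Integrable g μ) (hg₀ : ∀ x, 0 ≤ g x) :
    IntegrableOn (fun s => μ.real {x | s < g x}) (Set.Ioi 0) := by
  have hanti : Antitone fun s => μ {x | s < g x} :=
    fun _ _ hst => measure_mono fun _ hx => hst.trans_lt hx
  refine integrable_toReal_of_lintegral_ne_top hanti.measurable.aemeasurable ?_
  rw [← lintegral_eq_lintegral_meas_lt μ (.of_forall hg₀) hg.aemeasurable]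
  exact hg.lintegral_lt_top.ne

lemma setIntegral_Ioo_indicator_Iio {F : Type*} [NormedAddCommGroup F] [NormedSpace ℝ F]
    [CompleteSpace F] {a M : ℝ} (ha : 0 ≤ a) (haM : a ≤ M) (v : F) :
    ∫ s in Set.Ioo 0 M, (Set.Iio a).indicator (fun _ => v) s = a • v := by
  have hinter : Set.Ioo 0 M ∩ Set.Iio a = Set.Ioo 0 a := by
    rw [Set.Ioo_inter_Iio, min_eq_right haM]
  rw [setIntegral_indicator measurableSet_Iio, hinter, setIntegral_const,
    Real.volume_real_Ioo_of_le ha, sub_zero]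

section LayerCake

variable {E : Type*} [NormedAddCommGroup E] [NormedSpace ℝ E] [FiniteDimensional ℝ E]
  [MeasurableSpace E] [BorelSpace E] {μ : Measure E} [μ.IsAddHaarMeasure]
  {φ : E → ℝ} {s : ℝ}

lemma measureReal_ball_mul (x : E) {t : ℝ} (ht : 0 < t) (r : ℝ) :
    μ.real (ball x (t * r)) = t ^ finrank ℝ E * μ.real (ball (0 : E) r) := by
  rw [measureReal_def, Measure.addHaar_ball_mul_of_pos μ x ht, ENNReal.toReal_mul,
    ENNReal.toReal_ofReal (by positivity), measureReal_def]

variable [Nontrivial E]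

lemma nonempty_setOf_le (hint : Integrable φ μ) (hs : 0 < s) : {y | φ y ≤ s}.Nonempty := by
  by_contra! hempty
  have huniv : {y | s < φ y} = Set.univ := by
    rw [← Set.compl_empty, ← hempty]
    ext y
    simp only [Set.mem_ofPred_eq, Set.mem_compl_iff, not_le]
  have hfinite : μ {y | s < φ y} < ∞ := hint.measure_gt_lt_top hs
  simp [huniv] at hfinite

lemma superlevelRadius_pos (hφ : IsRadiallyDecreasing φ) (hlsc : LowerSemicontinuous φ)
    (hint : Integrable φ μ) (hs : s ∈ Set.Ioo 0 (φ 0)) : 0 < superlevelRadius φ s := by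
  simpa using (lt_iff_norm_lt_superlevelRadius hφ hlsc (nonempty_setOf_le hint hs.1) 0).1 hs.2

lemma setOf_lt_eq_ball (hφ : IsRadiallyDecreasing φ) (hlsc : LowerSemicontinuous φ)
    (hint : Integrable φ μ) (hs : 0 < s) :
    {y | s < φ y} = ball 0 (superlevelRadius φ s) := by
  ext y
  rw [mem_ball_zero_iff]
  exact lt_iff_norm_lt_superlevelRadius hφ hlsc (nonempty_setOf_le hint hs) y

lemma integral_measureReal_ball_superlevelRadius (hφ₀ : ∀ x, 0 ≤ φ x)
    (hφ : IsRadiallyDecreasing φ) (hlsc : LowerSemicontinuous φ) (hint : Integrable φ μ) :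
    ∫ s in Set.Ioo 0 (φ 0), μ.real (ball (0 : E) (superlevelRadius φ s)) = ∫ x, φ x ∂μ := by
  have hvanish : ∀ s ∈ Set.Ioi 0 \ Set.Ioo 0 (φ 0), μ.real {y | s < φ y} = 0 := by
    rintro s ⟨hs, hs'⟩
    have hle : φ 0 ≤ s := not_lt.1 fun h => hs' ⟨hs, h⟩
    have hempty : {y | s < φ y} = ∅ :=
      Set.eq_empty_of_forall_notMem fun y hy => (hle.trans_lt hy).not_ge (hφ 0 y (by simp))
    rw [hempty, measureReal_empty]
  rw [hint.integral_eq_integral_meas_lt (.of_forall hφ₀),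
    setIntegral_eq_of_subset_of_forall_sdiff_eq_zero measurableSet_Ioi
      Set.Ioo_subset_Ioi_self hvanish]
  exact setIntegral_congr_fun measurableSet_Ioo fun s hs => by
    rw [setOf_lt_eq_ball hφ hlsc hint hs.1]

lemma integrableOn_superlevelRadius_pow (hφ₀ : ∀ x, 0 ≤ φ x) (hφ : IsRadiallyDecreasing φ)
    (hlsc : LowerSemicontinuous φ) (hint : Integrable φ μ) :
    IntegrableOn (fun s => superlevelRadius φ s ^ finrank ℝ E) (Set.Ioo 0 (φ 0)) := by
  have hω : μ.real (ball (0 : E) 1) ≠ 0 :=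
    (ENNReal.toReal_pos (measure_ball_pos μ 0 one_pos).ne' measure_ball_lt_top.ne).ne'
  have hvolume := ((integrableOn_measureReal_lt hint hφ₀).mono_set
    (Set.Ioo_subset_Ioi_self (a := φ 0))).div_const (μ.real (ball (0 : E) 1))
  refine IntegrableOn.congr_fun hvolume (fun s hs => ?_) measurableSet_Ioo
  have hr := superlevelRadius_pos hφ hlsc hint hs
  rw [setOf_lt_eq_ball hφ hlsc hint hs.1, ← mul_one (superlevelRadius φ s),
    measureReal_ball_mul 0 hr, mul_one, mul_div_cancel_right₀ _ hω]

lemma integrableOn_add_mul_superlevelRadius_pow (hφ₀ : ∀ x, 0 ≤ φ x)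
    (hφ : IsRadiallyDecreasing φ) (hlsc : LowerSemicontinuous φ) (hint : Integrable φ μ)
    {a b : ℝ} (ha : 0 ≤ a) (hb : 0 ≤ b) :
    IntegrableOn (fun s => (a + b * superlevelRadius φ s) ^ finrank ℝ E) (Set.Ioo 0 (φ 0)) := by
  set d := finrank ℝ E
  have hmeas : AEMeasurable (superlevelRadius φ) (volume.restrict (Set.Ioo 0 (φ 0))) :=
    aemeasurable_restrict_of_antitoneOn measurableSet_Ioo <|
      antitoneOn_superlevelRadius.mono fun _ hs => nonempty_setOf_le hint hs.1
  have hbound : IntegrableOn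
      (fun s => 2 ^ (d - 1) * (a ^ d + b ^ d * superlevelRadius φ s ^ d)) (Set.Ioo 0 (φ 0)) :=
    (Integrable.add (integrable_const _)
      ((integrableOn_superlevelRadius_pow hφ₀ hφ hlsc hint).const_mul _)).const_mul _
  refine hbound.mono' (((hmeas.const_mul b).const_add a).pow_const d).aestronglyMeasurable ?_
  filter_upwards [ae_restrict_mem measurableSet_Ioo] with s hs
  have hr := superlevelRadius_pos hφ hlsc hint hs
  rw [Real.norm_of_nonneg (by positivity), ← mul_pow]
  exact add_pow_le ha (by positivity) d

end LayerCake

section Growth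

variable {E : Type*} [NormedAddCommGroup E] [ProperSpace E] [MeasurableSpace E]
  {F : Type*} [NormedAddCommGroup F] {ν : Measure E} {f : E → F} {d : ℕ}

lemma integrableOn_ball (hf : LocallyIntegrable f ν) (x : E) (r : ℝ) :
    IntegrableOn f (ball x r) ν :=
  (hf.integrableOn_isCompact (isCompact_closedBall x r)).mono_set ball_subset_closedBall

lemma exists_setIntegral_norm_ball_le (hf : LocallyIntegrable f ν)
    (hgrowth : (fun r : ℝ => ∫ ξ in ball 0 r, ‖f ξ‖ ∂ν) =O[atTop] fun r => r ^ d) :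
    ∃ C ≥ 0, ∃ r₀ ≥ 0, ∀ (x : E) (r : ℝ), 0 ≤ r →
      ∫ ξ in ball x r, ‖f ξ‖ ∂ν ≤ C * (‖x‖ + r + r₀) ^ d := by
  obtain ⟨C, hC, hbigO⟩ := hgrowth.exists_nonneg
  obtain ⟨r₁, hr₁⟩ := eventually_atTop.1 (Asymptotics.isBigOWith_iff.1 hbigO)
  refine ⟨C, hC, max r₁ 0, le_max_right _ _, fun x r hr => ?_⟩
  set ρ := ‖x‖ + r + max r₁ 0
  have hρ : 0 ≤ ρ := by positivity
  have hr₁ρ : r₁ ≤ ρ := (le_max_left r₁ 0).trans (le_add_of_nonneg_left (by positivity))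
  have hsub : ball x r ⊆ ball 0 ρ := by
    refine ball_subset_ball' ?_
    rw [dist_zero_right, add_comm r]
    exact le_add_of_nonneg_right (le_max_right _ _)
  calc ∫ ξ in ball x r, ‖f ξ‖ ∂ν ≤ ∫ ξ in ball 0 ρ, ‖f ξ‖ ∂ν :=
        setIntegral_mono_set (integrableOn_ball hf 0 ρ).norm
          (.of_forall fun _ => norm_nonneg _) hsub.eventuallyLE
    _ ≤ ‖∫ ξ in ball 0 ρ, ‖f ξ‖ ∂ν‖ := le_abs_self _
    _ ≤ C * ‖ρ ^ d‖ := hr₁ ρ hr₁ρ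
    _ = C * ρ ^ d := by rw [Real.norm_of_nonneg (pow_nonneg hρ d)]

end Growth

section SuperlevelIntegrand

variable {E : Type*} [NormedAddCommGroup E] [NormedSpace ℝ E]
  {F : Type*} [NormedAddCommGroup F] {f : E → F} {φ : E → ℝ}

/-- The integrand `(s, ξ) ↦ 1_{s < φ((x - ξ)/t)} f(ξ)`. By Fubini its double integral is both
`tᵈ • kernelIntegral ν f φ x t` and the integral over `s` of the masses that `f dν` gives to balls
centred at `x`. -/
def superlevelIntegrand (f : E → F) (φ : E → ℝ) (x : E) (t s : ℝ) (ξ : E) : F :=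
  (Set.Iio (φ (t⁻¹ • (x - ξ)))).indicator (fun _ => f ξ) s

lemma setIntegral_superlevelIntegrand_left [NormedSpace ℝ F] [CompleteSpace F]
    (hφ₀ : ∀ x, 0 ≤ φ x) (hφ : IsRadiallyDecreasing φ) (x : E) (t : ℝ) (ξ : E) :
    ∫ s in Set.Ioo 0 (φ 0), superlevelIntegrand f φ x t s ξ = φ (t⁻¹ • (x - ξ)) • f ξ :=
  setIntegral_Ioo_indicator_Iio (hφ₀ _) (hφ _ _ (by simp)) (f ξ)

variable [FiniteDimensional ℝ E] [Nontrivial E] [MeasurableSpace E] [BorelSpace E]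
  {μ : Measure E} [μ.IsAddHaarMeasure] {ν : Measure E}

lemma superlevelIntegrand_eq_indicator_ball (hφ : IsRadiallyDecreasing φ)
    (hlsc : LowerSemicontinuous φ) (hint : Integrable φ μ) (x : E) {t s : ℝ} (ht : 0 < t)
    (hs : 0 < s) (ξ : E) :
    superlevelIntegrand f φ x t s ξ = (ball x (t * superlevelRadius φ s)).indicator f ξ := by
  have hiff : s < φ (t⁻¹ • (x - ξ)) ↔ ξ ∈ ball x (t * superlevelRadius φ s) := by
    rw [lt_iff_norm_lt_superlevelRadius hφ hlsc (nonempty_setOf_le hint hs), norm_smul, norm_inv,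
      Real.norm_of_nonneg ht.le, mem_ball', dist_eq_norm, inv_mul_lt_iff₀ ht]
  exact Set.indicator_eq_indicator hiff rfl

lemma integral_superlevelIntegrand_right [NormedSpace ℝ F] (hφ : IsRadiallyDecreasing φ)
    (hlsc : LowerSemicontinuous φ) (hint : Integrable φ μ) (x : E) {t s : ℝ} (ht : 0 < t)
    (hs : 0 < s) :
    ∫ ξ, superlevelIntegrand f φ x t s ξ ∂ν =
      ∫ ξ in ball x (t * superlevelRadius φ s), f ξ ∂ν := by
  simp only [superlevelIntegrand_eq_indicator_ball hφ hlsc hint x ht hs,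
    integral_indicator measurableSet_ball]

lemma integrable_superlevelIntegrand [SFinite ν] (hφ₀ : ∀ x, 0 ≤ φ x)
    (hφ : IsRadiallyDecreasing φ) (hlsc : LowerSemicontinuous φ) (hint : Integrable φ μ)
    (hf : LocallyIntegrable f ν)
    (hgrowth : (fun r : ℝ => ∫ ξ in ball 0 r, ‖f ξ‖ ∂ν) =O[atTop] fun r => r ^ finrank ℝ E)
    (x : E) {t : ℝ} (ht : 0 < t) :
    Integrable (Function.uncurry (superlevelIntegrand f φ x t))
      ((volume.restrict (Set.Ioo 0 (φ 0))).prod ν) := by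
  obtain ⟨C, -, r₀, hr₀, hball⟩ := exists_setIntegral_norm_ball_le hf hgrowth
  have hset : MeasurableSet {p : ℝ × E | p.1 < φ (t⁻¹ • (x - p.2))} :=
    measurableSet_lt measurable_fst (hlsc.measurable.comp (by fun_prop))
  have hmeas : AEStronglyMeasurable (Function.uncurry (superlevelIntegrand f φ x t))
      ((volume.restrict (Set.Ioo 0 (φ 0))).prod ν) :=
    hf.aestronglyMeasurable.comp_snd.indicator hset
  refine (integrable_prod_iff hmeas).2 ⟨?_, ?_⟩
  · filter_upwards [ae_restrict_mem measurableSet_Ioo] with s hs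
    simp only [Function.uncurry, superlevelIntegrand_eq_indicator_ball hφ hlsc hint x ht hs.1]
    exact (integrable_indicator_iff measurableSet_ball).2 (integrableOn_ball hf _ _)
  · have hbound : IntegrableOn
        (fun s => C * (‖x‖ + r₀ + t * superlevelRadius φ s) ^ finrank ℝ E) (Set.Ioo 0 (φ 0)) :=
      (integrableOn_add_mul_superlevelRadius_pow hφ₀ hφ hlsc hint (by positivity) ht.le).const_mul C
    refine hbound.mono' hmeas.norm.integral_prod_right' ?_
    filter_upwards [ae_restrict_mem measurableSet_Ioo] with s hs
    have hr := superlevelRadius_pos hφ hlsc hint hs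
    simp only [Function.uncurry, superlevelIntegrand_eq_indicator_ball hφ hlsc hint x ht hs.1,
      norm_indicator_eq_indicator_norm, integral_indicator measurableSet_ball]
    rw [Real.norm_of_nonneg (integral_nonneg fun _ => norm_nonneg _), add_right_comm]
    exact hball x _ (by positivity)

end SuperlevelIntegrand

section KernelIntegral

variable {E : Type*} [NormedAddCommGroup E] [NormedSpace ℝ E]

/-- The dilated kernel `φ_t(x) = t⁻ᵈ φ(x/t)` on a space of dimension `d`; see `dil`. -/
def dilate (φ : E → ℝ) (t : ℝ) (x : E) : ℝ := (t ^ finrank ℝ E)⁻¹ * φ (t⁻¹ • x)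

variable {F : Type*} [NormedAddCommGroup F] [NormedSpace ℝ F] [MeasurableSpace E]

/-- The integral `φ[f dν](x, t)` of the vector measure `f dν` against the kernel `φ_t`; see
`convInt`. -/
def kernelIntegral (ν : Measure E) (f : E → F) (φ : E → ℝ) (x : E) (t : ℝ) : F :=
  ∫ ξ, dilate φ t (x - ξ) • f ξ ∂ν

variable [FiniteDimensional ℝ E] [Nontrivial E] [BorelSpace E]
  {μ : Measure E} [μ.IsAddHaarMeasure] {ν : Measure E} [SFinite ν] {f : E → F} {φ : E → ℝ}

lemma integrableOn_setIntegral_ball_superlevelRadius (hφ₀ : ∀ x, 0 ≤ φ x)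
    (hφ : IsRadiallyDecreasing φ) (hlsc : LowerSemicontinuous φ) (hint : Integrable φ μ)
    (hf : LocallyIntegrable f ν)
    (hgrowth : (fun r : ℝ => ∫ ξ in ball 0 r, ‖f ξ‖ ∂ν) =O[atTop] fun r => r ^ finrank ℝ E)
    (x : E) {t : ℝ} (ht : 0 < t) :
    IntegrableOn (fun s => ∫ ξ in ball x (t * superlevelRadius φ s), f ξ ∂ν)
      (Set.Ioo 0 (φ 0)) :=
  IntegrableOn.congr_fun
    (integrable_superlevelIntegrand hφ₀ hφ hlsc hint hf hgrowth x ht).integral_prod_left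
    (fun _ hs => integral_superlevelIntegrand_right hφ hlsc hint x ht hs.1) measurableSet_Ioo

lemma kernelIntegral_eq_setIntegral_ball [CompleteSpace F] (hφ₀ : ∀ x, 0 ≤ φ x)
    (hφ : IsRadiallyDecreasing φ) (hlsc : LowerSemicontinuous φ) (hint : Integrable φ μ)
    (hf : LocallyIntegrable f ν)
    (hgrowth : (fun r : ℝ => ∫ ξ in ball 0 r, ‖f ξ‖ ∂ν) =O[atTop] fun r => r ^ finrank ℝ E)
    (x : E) {t : ℝ} (ht : 0 < t) :
    kernelIntegral ν f φ x t = ∫ s in Set.Ioo 0 (φ 0),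
      (t ^ finrank ℝ E)⁻¹ • ∫ ξ in ball x (t * superlevelRadius φ s), f ξ ∂ν := by
  calc kernelIntegral ν f φ x t
      = (t ^ finrank ℝ E)⁻¹ • ∫ ξ, φ (t⁻¹ • (x - ξ)) • f ξ ∂ν := by
        simp only [kernelIntegral, dilate, mul_smul, integral_smul]
    _ = (t ^ finrank ℝ E)⁻¹ • ∫ ξ, (∫ s in Set.Ioo 0 (φ 0),
          superlevelIntegrand f φ x t s ξ) ∂ν := by
        simp only [setIntegral_superlevelIntegrand_left hφ₀ hφ]
    _ = (t ^ finrank ℝ E)⁻¹ • ∫ s in Set.Ioo 0 (φ 0),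
          ∫ ξ, superlevelIntegrand f φ x t s ξ ∂ν := by
        rw [← integral_integral_swap
          (integrable_superlevelIntegrand hφ₀ hφ hlsc hint hf hgrowth x ht)]
    _ = (t ^ finrank ℝ E)⁻¹ • ∫ s in Set.Ioo 0 (φ 0),
          ∫ ξ in ball x (t * superlevelRadius φ s), f ξ ∂ν := by
        rw [setIntegral_congr_fun measurableSet_Ioo fun s hs =>
          integral_superlevelIntegrand_right hφ hlsc hint x ht hs.1]
    _ = _ := (integral_smul _ _).symm

end KernelIntegral

section NontangentialLimit

variable {E : Type*} [NormedAddCommGroup E]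

/-- The cone `S(x₀, α) = {(x, t) | ‖x - x₀‖ < α t}` in the upper half-space. -/
def nontangentialCone (x₀ : E) (α : ℝ) : Set (E × ℝ) := {p | 0 < p.2 ∧ dist p.1 x₀ < α * p.2}

/-- `u` has nontangential limit `L` at `x₀`; see `NTlim`. -/
def HasNontangentialLimit {F : Type*} [TopologicalSpace F] (u : E → ℝ → F) (x₀ : E) (L : F) :
    Prop :=
  ∀ α > 0, Tendsto (fun p : E × ℝ => u p.1 p.2) (𝓝[nontangentialCone x₀ α] (x₀, 0)) (𝓝 L)

variable {x₀ : E} {α : ℝ}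

lemma eventually_dist_lt_nontangentialCone {δ : ℝ} (hδ : 0 < δ) :
    ∀ᶠ p in 𝓝[nontangentialCone x₀ α] (x₀, (0 : ℝ)), dist p.1 x₀ < δ :=
  nhdsWithin_le_nhds (continuous_fst.tendsto (x₀, (0 : ℝ)) (ball_mem_nhds x₀ hδ))

lemma eventually_mul_lt_nontangentialCone (r : ℝ) {δ : ℝ} (hδ : 0 < δ) :
    ∀ᶠ p in 𝓝[nontangentialCone x₀ α] (x₀, (0 : ℝ)), p.2 * r < δ := by
  have hcont : Continuous fun p : E × ℝ => p.2 * r := by fun_prop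
  exact nhdsWithin_le_nhds (hcont.tendsto (x₀, (0 : ℝ)) (Iio_mem_nhds (by simpa using hδ)))

lemma dist_add_mul_pow_le {p : E × ℝ} (hp : p ∈ nontangentialCone x₀ α) {r : ℝ} (hr : 0 ≤ r)
    (d : ℕ) : (dist p.1 x₀ + p.2 * r) ^ d ≤ p.2 ^ d * (α + r) ^ d := by
  have ht : 0 < p.2 := hp.1
  rw [← mul_pow]
  gcongr
  linarith [hp.2]

variable [NormedSpace ℝ E] [MeasurableSpace E]
  {F : Type*} [NormedAddCommGroup F] [NormedSpace ℝ F]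

/-- `x₀` is a σ-point of the vector measure `f dν`, with derivative `L` relative to the Haar measure
`μ`; see `IsSigmaPt`. -/
def IsSigmaPoint (μ ν : Measure E) (f : E → F) (x₀ : E) (L : F) : Prop :=
  ∀ ε > 0, ∃ δ > 0, ∀ (x : E) (r : ℝ), 0 < r → dist x x₀ < δ → r < δ →
    ‖∫ ξ in ball x r, f ξ ∂ν - μ.real (ball x r) • L‖ < ε * (dist x x₀ + r) ^ finrank ℝ E

variable [FiniteDimensional ℝ E] [BorelSpace E]
  {μ : Measure E} [μ.IsAddHaarMeasure] {ν : Measure E} {f : E → F} {L : F}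

lemma norm_setIntegral_ball_le_of_sub_le {x : E} {r : ℝ} (hr : 0 < r)
    (h : ‖∫ ξ in ball x r, f ξ ∂ν - μ.real (ball x r) • L‖ ≤ (dist x x₀ + r) ^ finrank ℝ E) :
    ‖∫ ξ in ball x r, f ξ ∂ν‖ ≤
      (1 + μ.real (ball (0 : E) 1) * ‖L‖) * (dist x x₀ + r) ^ finrank ℝ E := by
  have hvolume : μ.real (ball x r) ≤ μ.real (ball (0 : E) 1) * (dist x x₀ + r) ^ finrank ℝ E := by
    rw [← mul_one r, measureReal_ball_mul x hr, mul_one, mul_comm]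
    gcongr
    exact le_add_of_nonneg_left dist_nonneg
  calc ‖∫ ξ in ball x r, f ξ ∂ν‖
      ≤ ‖∫ ξ in ball x r, f ξ ∂ν - μ.real (ball x r) • L‖ + ‖μ.real (ball x r) • L‖ :=
        norm_le_norm_sub_add _ _
    _ ≤ (dist x x₀ + r) ^ finrank ℝ E
          + μ.real (ball (0 : E) 1) * (dist x x₀ + r) ^ finrank ℝ E * ‖L‖ := by
        rw [norm_smul, Real.norm_of_nonneg measureReal_nonneg]
        gcongr
    _ = _ := by ring

lemma IsSigmaPoint.exists_norm_setIntegral_ball_le (hσ : IsSigmaPoint μ ν f x₀ L)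
    (hf : LocallyIntegrable f ν)
    (hgrowth : (fun r : ℝ => ∫ ξ in ball 0 r, ‖f ξ‖ ∂ν) =O[atTop] fun r => r ^ finrank ℝ E) :
    ∃ K ≥ 0, ∃ δ > 0, ∀ (x : E) (r : ℝ), dist x x₀ < δ → 0 < r →
      ‖∫ ξ in ball x r, f ξ ∂ν‖ ≤ K * (dist x x₀ + r) ^ finrank ℝ E := by
  obtain ⟨δ, hδ, hsmall⟩ := hσ 1 one_pos
  obtain ⟨C, hC, r₀, hr₀, hball⟩ := exists_setIntegral_norm_ball_le hf hgrowth
  set b := (‖x₀‖ + δ + r₀) / δ + 1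
  refine ⟨max (1 + μ.real (ball (0 : E) 1) * ‖L‖) (C * b ^ finrank ℝ E), ?_, δ, hδ,
    fun x r hx hr => ?_⟩
  · positivity
  -- Small radii are controlled by the σ-point condition, radii `r ≥ δ` by the growth of `f dν`,
  -- since there `‖x‖ + r + r₀` is at most a constant times `r`.
  rcases lt_or_ge r δ with hrδ | hδr
  · have hsub := (hsmall x r hr hx hrδ).le
    rw [one_mul] at hsub
    grw [norm_setIntegral_ball_le_of_sub_le hr hsub, ← le_max_left]
  · have hx_norm : ‖x‖ ≤ ‖x₀‖ + δ := by
      linarith [norm_le_norm_add_norm_sub x₀ x, dist_eq_norm x x₀, norm_sub_rev x₀ x]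
    have hradius : ‖x‖ + r + r₀ ≤ b * (dist x x₀ + r) := by
      have hconst : ‖x₀‖ + δ + r₀ ≤ (‖x₀‖ + δ + r₀) / δ * r := by
        rw [div_mul_eq_mul_div, le_div_iff₀ hδ]
        gcongr
      calc ‖x‖ + r + r₀ ≤ b * r := by linarith
        _ ≤ b * (dist x x₀ + r) := by
          gcongr
          exact le_add_of_nonneg_left dist_nonneg
    calc ‖∫ ξ in ball x r, f ξ ∂ν‖ ≤ ∫ ξ in ball x r, ‖f ξ‖ ∂ν := norm_integral_le_integral_norm _
      _ ≤ C * (‖x‖ + r + r₀) ^ finrank ℝ E := hball x r hr.le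
      _ ≤ C * (b * (dist x x₀ + r)) ^ finrank ℝ E := by gcongr
      _ = C * b ^ finrank ℝ E * (dist x x₀ + r) ^ finrank ℝ E := by rw [mul_pow, mul_assoc]
      _ ≤ _ := by grw [← le_max_right]

lemma IsSigmaPoint.tendsto_setIntegral_ball (hσ : IsSigmaPoint μ ν f x₀ L) (hα : 0 < α) {r : ℝ}
    (hr : 0 < r) :
    Tendsto (fun p : E × ℝ => (p.2 ^ finrank ℝ E)⁻¹ • ∫ ξ in ball p.1 (p.2 * r), f ξ ∂ν)
      (𝓝[nontangentialCone x₀ α] (x₀, 0)) (𝓝 (μ.real (ball (0 : E) r) • L)) := by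
  rw [Metric.tendsto_nhds]
  intro ε hε
  obtain ⟨δ, hδ, hsmall⟩ := hσ (ε / (α + r) ^ finrank ℝ E) (by positivity)
  filter_upwards [self_mem_nhdsWithin, eventually_dist_lt_nontangentialCone hδ,
    eventually_mul_lt_nontangentialCone r hδ] with p hp hdist hradius
  have ht : 0 < p.2 ^ finrank ℝ E := pow_pos hp.1 _
  have hscale : (p.2 ^ finrank ℝ E)⁻¹ • ∫ ξ in ball p.1 (p.2 * r), f ξ ∂ν
      - μ.real (ball (0 : E) r) • L = (p.2 ^ finrank ℝ E)⁻¹ •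
        (∫ ξ in ball p.1 (p.2 * r), f ξ ∂ν - μ.real (ball p.1 (p.2 * r)) • L) := by
    rw [smul_sub, measureReal_ball_mul p.1 hp.1, smul_smul, inv_mul_cancel_left₀ ht.ne']
  rw [dist_eq_norm, hscale, norm_smul, Real.norm_of_nonneg (by positivity), inv_mul_lt_iff₀ ht]
  calc ‖∫ ξ in ball p.1 (p.2 * r), f ξ ∂ν - μ.real (ball p.1 (p.2 * r)) • L‖
      < ε / (α + r) ^ finrank ℝ E * (dist p.1 x₀ + p.2 * r) ^ finrank ℝ E :=
        hsmall p.1 (p.2 * r) (mul_pos hp.1 hr) hdist hradius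
    _ ≤ ε / (α + r) ^ finrank ℝ E * (p.2 ^ finrank ℝ E * (α + r) ^ finrank ℝ E) := by
        gcongr
        exact dist_add_mul_pow_le hp hr.le _
    _ = p.2 ^ finrank ℝ E * ε := by field_simp

lemma IsSigmaPoint.exists_eventually_norm_setIntegral_ball_le (hσ : IsSigmaPoint μ ν f x₀ L)
    (hf : LocallyIntegrable f ν)
    (hgrowth : (fun r : ℝ => ∫ ξ in ball 0 r, ‖f ξ‖ ∂ν) =O[atTop] fun r => r ^ finrank ℝ E)
    (α : ℝ) :
    ∃ K : ℝ, ∀ᶠ p in 𝓝[nontangentialCone x₀ α] (x₀, (0 : ℝ)), ∀ r : ℝ, 0 < r →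
      ‖(p.2 ^ finrank ℝ E)⁻¹ • ∫ ξ in ball p.1 (p.2 * r), f ξ ∂ν‖ ≤ K * (α + r) ^ finrank ℝ E := by
  obtain ⟨K, hK, δ, hδ, hball⟩ := hσ.exists_norm_setIntegral_ball_le hf hgrowth
  refine ⟨K, ?_⟩
  filter_upwards [self_mem_nhdsWithin, eventually_dist_lt_nontangentialCone hδ] with p hp hdist r hr
  have ht : 0 < p.2 ^ finrank ℝ E := pow_pos hp.1 _
  rw [norm_smul, Real.norm_of_nonneg (inv_nonneg.2 ht.le), inv_mul_le_iff₀ ht]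
  calc ‖∫ ξ in ball p.1 (p.2 * r), f ξ ∂ν‖
      ≤ K * (dist p.1 x₀ + p.2 * r) ^ finrank ℝ E := hball p.1 _ hdist (mul_pos hp.1 hr)
    _ ≤ K * (p.2 ^ finrank ℝ E * (α + r) ^ finrank ℝ E) := by
        gcongr
        exact dist_add_mul_pow_le hp hr.le _
    _ = p.2 ^ finrank ℝ E * (K * (α + r) ^ finrank ℝ E) := by ring

end NontangentialLimit

theorem stmt1_general {E : Type*} [NormedAddCommGroup E] [NormedSpace ℝ E] [FiniteDimensional ℝ E]
    [Nontrivial E] [MeasurableSpace E] [BorelSpace E] (μ : Measure E) [μ.IsAddHaarMeasure]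
    {F : Type*} [NormedAddCommGroup F] [NormedSpace ℝ F] [CompleteSpace F] (φ : E → ℝ)
    (hφ₀ : ∀ x, 0 ≤ φ x) (hφ : IsRadiallyDecreasing φ) (hlsc : LowerSemicontinuous φ)
    (hint : Integrable φ μ) (ν : Measure E) [SFinite ν] (f : E → F) (hf : LocallyIntegrable f ν)
    (hgrowth : (fun r : ℝ => ∫ ξ in ball 0 r, ‖f ξ‖ ∂ν) =O[atTop] fun r => r ^ finrank ℝ E)
    (x₀ : E) (L : F) (hσ : IsSigmaPoint μ ν f x₀ L) :
    HasNontangentialLimit (kernelIntegral ν f φ) x₀ ((∫ x, φ x ∂μ) • L) := by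
  intro α hα
  rw [← integral_measureReal_ball_superlevelRadius hφ₀ hφ hlsc hint, ← integral_smul_const]
  have hrepr : ∀ᶠ p in 𝓝[nontangentialCone x₀ α] (x₀, (0 : ℝ)), ∫ s in Set.Ioo 0 (φ 0),
      (p.2 ^ finrank ℝ E)⁻¹ • ∫ ξ in ball p.1 (p.2 * superlevelRadius φ s), f ξ ∂ν =
        kernelIntegral ν f φ p.1 p.2 := by
    filter_upwards [self_mem_nhdsWithin] with p hp
    exact (kernelIntegral_eq_setIntegral_ball hφ₀ hφ hlsc hint hf hgrowth p.1 hp.1).symm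
  refine Tendsto.congr' hrepr ?_
  obtain ⟨K, hK⟩ := hσ.exists_eventually_norm_setIntegral_ball_le hf hgrowth α
  refine tendsto_integral_filter_of_dominated_convergence
    (fun s => K * (α + superlevelRadius φ s) ^ finrank ℝ E) ?_ ?_ ?_ ?_
  · filter_upwards [self_mem_nhdsWithin] with p hp
    exact (integrableOn_setIntegral_ball_superlevelRadius hφ₀ hφ hlsc hint hf hgrowth p.1
      hp.1).aestronglyMeasurable.const_smul _
  · filter_upwards [hK] with p hp
    filter_upwards [ae_restrict_mem measurableSet_Ioo] with s hs
    exact hp _ (superlevelRadius_pos hφ hlsc hint hs)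
  · simpa only [one_mul] using
      (integrableOn_add_mul_superlevelRadius_pow hφ₀ hφ hlsc hint hα.le zero_le_one).const_mul K
  · filter_upwards [ae_restrict_mem measurableSet_Ioo] with s hs
    exact hσ.tendsto_setIntegral_ball hα (superlevelRadius_pos hφ hlsc hint hs)

section Euclidean

variable {n : ℕ} {ν : Measure (Eu n)} {f : Eu n → ℂ}

lemma IsSigmaPt.isSigmaPoint {x₀ : Eu n} {L : ℂ} (hσ : IsSigmaPt n ν f x₀ L) :
    IsSigmaPoint volume ν f x₀ L := by
  simpa only [IsSigmaPt, IsSigmaPoint, measureReal_def, Complex.real_smul, mul_comm L,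
    finrank_euclideanSpace_fin] using hσ

lemma kernelIntegral_eq_convInt (φ : Eu n → ℝ) :
    kernelIntegral ν f φ = fun x t => convInt n ν f φ x t := by
  ext x t
  simp only [kernelIntegral, convInt, dilate, dil, Complex.real_smul, finrank_euclideanSpace_fin]

end Euclidean

lemma locallyIntegrable_of_norm_eq_one {X F : Type*} [TopologicalSpace X] [MeasurableSpace X]
    [NormedAddCommGroup F] {ν : Measure X} [IsLocallyFiniteMeasure ν] {f : X → F}
    (hf : AEStronglyMeasurable f ν) (hf₁ : ∀ ξ, ‖f ξ‖ = 1) : LocallyIntegrable f ν :=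
  (locallyIntegrable_const (1 : ℝ)).mono hf (.of_forall fun ξ => by simp [hf₁ ξ])

theorem stmt1 {n : ℕ} (hn : 0 < n) (φ : Eu n → ℝ)
    (hφpos : ∀ x, 0 ≤ φ x)
    (hφrad : RadialDecr φ) (hφlsc : LowerSemicontinuous φ)
    (hφint : ∫ x, φ x = 1)
    (ν : Measure (Eu n)) [IsLocallyFiniteMeasure ν]
    (f : Eu n → ℂ) (hf : Measurable f) (hf1 : ∀ ξ, ‖f ξ‖ = 1)
    (hgrowth : (fun r : ℝ => (ν (ball (0 : Eu n) r)).toReal) =O[atTop] (fun r : ℝ => r ^ n))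
    (t₀ : ℝ) (ht₀ : 0 < t₀) (x₁ : Eu n)
    (hfin : Integrable (fun ξ => (dil n φ t₀ (x₁ - ξ) : ℂ) * f ξ) ν)
    (x₀ : Eu n) (L : ℂ) (hσ : IsSigmaPt n ν f x₀ L) :
    NTlim n (fun x t => convInt n ν f φ x t) x₀ L := by
  have : Nonempty (Fin n) := ⟨⟨0, hn⟩⟩
  have hlim := stmt1_general volume φ hφpos hφrad hφlsc (.of_integral_ne_zero (by simp [hφint])) ν f
    (locallyIntegrable_of_norm_eq_one hf.aestronglyMeasurable hf1)
    (by simpa [hf1, measureReal_def] using hgrowth) x₀ L hσ.isSigmaPoint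
  rwa [hφint, one_smul, kernelIntegral_eq_convInt] at hlim

end
end

section
/- Let μ be a locally finite complex (or signed) Borel measure on ℝⁿ such that the Gauss–Weierstrass integral W|μ|(x₁,t₀) = ∫_{ℝⁿ} W(x₁−y, t₀) d|μ|(y) is finite for some x₁ ∈ ℝⁿ and t₀ > 0. If x₀ ∈ ℝⁿ is a σ-point of μ with D_σμ(x₀) = L ∈ ℂ, then the Gauss–Weierstrass integral Wμ(x,t) = ∫_{ℝⁿ} W(x−y,t) dμ(y) has nontangential limit L at x₀, i.e. for every α > 0, Wμ(x,t) → L as (x,t) → (x₀,0) with ‖x−x₀‖ < αt. -/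
/-!
Write `dμ = f dν`. The heat kernel is a superposition of indicators of balls,
`W(x - ξ, t) = ∫₀^∞ k(s) t^{-n/2} 1_{B(x, √t s)}(ξ) ds` with `k(s) = (4π)^{-n/2} (s/2) e^{-s²/4}`,
and `W` has total mass one, so by Fubini's theorem
`Wμ(x, t) - L = ∫₀^∞ k(s) t^{-n/2} (μ - L m)(B(x, √t s)) ds`.
As `(x, t) → (x₀, 0)` with `‖x - x₀‖ < α √t`, the σ-point condition says that
`(μ - L m)(B(x, √t s))` is `o(t^{n/2})` for each fixed `s`. Dominated convergence applies: small
balls are controlled by the σ-point condition, large ones by the finiteness of `W|μ|(x₁, t₀)`,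
which allows at most Gaussian growth of `|μ|(B(x, r))` in `r`.
-/

open MeasureTheory Metric Filter Real
open scoped ENNReal Topology NNReal

noncomputable section

/-- The Gauss–Weierstrass (heat) kernel `W(x,t) = (4πt)^{-n/2} e^{-‖x‖²/(4t)}`. -/
def heatKer (n : ℕ) (x : Eu n) (t : ℝ) : ℝ :=
  (4 * π * t) ^ (-(n : ℝ) / 2) * Real.exp (-‖x‖ ^ 2 / (4 * t))

/-- The Gauss–Weierstrass integral Wμ(x,t) of the measure dμ = f dν. -/
def heatInt (n : ℕ) (ν : Measure (Eu n)) (f : Eu n → ℂ) (x : Eu n) (t : ℝ) : ℂ :=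
  ∫ ξ, (heatKer n (x - ξ) t : ℂ) * f ξ ∂ν

section RadialKernels

variable {X E : Type*} [PseudoMetricSpace X] [NormedAddCommGroup E] [NormedSpace ℝ E] {f : X → E}
  {k : ℝ → ℝ} {x : X} {c : ℝ}

lemma setIntegral_Ioi_indicator_Ioi {F : ℝ → E} {a : ℝ} (ha : 0 ≤ a) :
    ∫ s in Set.Ioi 0, (Set.Ioi a).indicator F s = ∫ s in Set.Ioi a, F s := by
  rw [setIntegral_indicator measurableSet_Ioi,
    Set.inter_eq_self_of_subset_right (Set.Ioi_subset_Ioi ha)]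

lemma indicator_ball_smul_eq_indicator_Ioi_smul (hc : 0 < c) (s : ℝ) (ξ : X) :
    (ball x (c * s)).indicator (fun ξ => k s • f ξ) ξ =
      (Set.Ioi (dist ξ x / c)).indicator (fun s => k s • f ξ) s := by
  classical simp only [Set.indicator_apply, mem_ball, Set.mem_Ioi, div_lt_iff₀' hc]

variable [MeasurableSpace X] [OpensMeasurableSpace X] {ν : Measure X}

lemma integral_indicator_ball_smul (s : ℝ) :
    ∫ ξ, (ball x (c * s)).indicator (fun ξ => k s • f ξ) ξ ∂ν =
      k s • ∫ ξ in ball x (c * s), f ξ ∂ν := by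
  rw [integral_indicator measurableSet_ball, integral_smul]

lemma measurableSet_setOf_snd_mem_ball_mul_fst (x : X) (c : ℝ) :
    MeasurableSet {p : ℝ × X | p.2 ∈ ball x (c * p.1)} :=
  measurableSet_lt ((continuous_id.dist continuous_const).measurable.comp measurable_snd)
    (measurable_fst.const_mul c)

lemma aestronglyMeasurable_indicator_ball_smul_prod {μ : Measure ℝ} (hk : Measurable k)
    (hf : AEStronglyMeasurable f ν) :
    AEStronglyMeasurable
      (fun p : ℝ × X => (ball x (c * p.1)).indicator (fun ξ => k p.1 • f ξ) p.2) (μ.prod ν) :=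
  (((hk.comp measurable_fst).aestronglyMeasurable).smul hf.comp_snd).indicator
    (measurableSet_setOf_snd_mem_ball_mul_fst x c)

variable [SFinite ν]

lemma aestronglyMeasurable_setIntegral_ball {μ : Measure ℝ} (hf : AEStronglyMeasurable f ν) :
    AEStronglyMeasurable (fun s => ∫ ξ in ball x (c * s), f ξ ∂ν) μ := by
  simp only [← integral_indicator measurableSet_ball]
  exact (hf.comp_snd.indicator (measurableSet_setOf_snd_mem_ball_mul_fst x c)).integral_prod_right'

lemma integrable_indicator_ball_smul_prod (hc : 0 < c) (hk : Measurable k)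
    (hk_nonneg : ∀ s, 0 ≤ s → 0 ≤ k s) (hk_int : IntegrableOn k (Set.Ioi 0))
    (hf : AEStronglyMeasurable f ν)
    (hint : Integrable (fun ξ => (∫ s in Set.Ioi (dist ξ x / c), k s) • f ξ) ν) :
    Integrable (fun p : ℝ × X => (ball x (c * p.1)).indicator (fun ξ => k p.1 • f ξ) p.2)
      ((volume.restrict (Set.Ioi 0)).prod ν) := by
  have hmeas := aestronglyMeasurable_indicator_ball_smul_prod (x := x) (c := c)
    (μ := volume.restrict (Set.Ioi 0)) hk hf
  simp only [indicator_ball_smul_eq_indicator_Ioi_smul hc] at hmeas ⊢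
  have hdist (ξ : X) : 0 ≤ dist ξ x / c := by positivity
  refine (integrable_prod_iff' hmeas).2 ⟨.of_forall fun ξ => ?_, ?_⟩
  · change Integrable ((Set.Ioi (dist ξ x / c)).indicator fun s => k s • f ξ) _
    exact Integrable.indicator (hk_int.smul_const (f ξ)) measurableSet_Ioi
  · refine hint.norm.congr (.of_forall fun ξ => ?_)
    have hk_nonneg' (s : ℝ) (hs : s ∈ Set.Ioi (dist ξ x / c)) : 0 ≤ k s :=
      hk_nonneg s ((hdist ξ).trans (le_of_lt hs))
    simp only [norm_indicator_eq_indicator_norm, setIntegral_Ioi_indicator_Ioi (hdist ξ),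
      norm_smul, integral_mul_const]
    rw [Real.norm_of_nonneg (setIntegral_nonneg measurableSet_Ioi hk_nonneg')]
    congr 1
    exact setIntegral_congr_fun measurableSet_Ioi fun s hs =>
      (Real.norm_of_nonneg (hk_nonneg' s hs)).symm

lemma integrableOn_smul_setIntegral_ball (hc : 0 < c) (hk : Measurable k)
    (hk_nonneg : ∀ s, 0 ≤ s → 0 ≤ k s) (hk_int : IntegrableOn k (Set.Ioi 0))
    (hf : AEStronglyMeasurable f ν)
    (hint : Integrable (fun ξ => (∫ s in Set.Ioi (dist ξ x / c), k s) • f ξ) ν) :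
    IntegrableOn (fun s => k s • ∫ ξ in ball x (c * s), f ξ ∂ν) (Set.Ioi 0) := by
  simpa only [integral_indicator_ball_smul, IntegrableOn] using
    (integrable_indicator_ball_smul_prod hc hk hk_nonneg hk_int hf hint).integral_prod_left

theorem integral_radial_smul_eq_integral_setIntegral_ball [CompleteSpace E] (hc : 0 < c)
    (hk : Measurable k) (hk_nonneg : ∀ s, 0 ≤ s → 0 ≤ k s) (hk_int : IntegrableOn k (Set.Ioi 0))
    (hf : AEStronglyMeasurable f ν)
    (hint : Integrable (fun ξ => (∫ s in Set.Ioi (dist ξ x / c), k s) • f ξ) ν) :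
    ∫ ξ, (∫ s in Set.Ioi (dist ξ x / c), k s) • f ξ ∂ν =
      ∫ s in Set.Ioi 0, k s • ∫ ξ in ball x (c * s), f ξ ∂ν := by
  simp only [← integral_indicator_ball_smul]
  rw [integral_integral_swap (integrable_indicator_ball_smul_prod hc hk hk_nonneg hk_int hf hint)]
  refine integral_congr_ae (.of_forall fun ξ => ?_)
  simp only [indicator_ball_smul_eq_indicator_Ioi_smul hc]
  rw [setIntegral_Ioi_indicator_Ioi (by positivity), integral_smul_const]

end RadialKernels

section GaussianWeights

variable {X : Type*} [PseudoMetricSpace X] {b : ℝ}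

lemma exp_neg_mul_dist_sq_le (hb : 0 ≤ b) (x y ξ : X) :
    exp (-(2 * b) * dist ξ x ^ 2) ≤ exp (2 * b * dist x y ^ 2) * exp (-b * dist ξ y ^ 2) := by
  have hdist : dist ξ y ^ 2 ≤ 2 * (dist ξ x ^ 2 + dist x y ^ 2) :=
    (pow_le_pow_left₀ dist_nonneg (dist_triangle ξ x y) 2).trans add_sq_le
  rw [← exp_add]
  gcongr
  nlinarith

variable {E : Type*} [MeasurableSpace X] [OpensMeasurableSpace X] [NormedAddCommGroup E]
  [NormedSpace ℝ E] {ν : Measure X} {f : X → E}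

lemma integrable_exp_neg_mul_dist_sq_smul {b' : ℝ} (hb : 0 ≤ b) (hbb' : 2 * b ≤ b') {y : X}
    (hf : AEStronglyMeasurable f ν)
    (hint : Integrable (fun ξ => exp (-b * dist ξ y ^ 2) • f ξ) ν) (x : X) :
    Integrable (fun ξ => exp (-b' * dist ξ x ^ 2) • f ξ) ν := by
  have hcont : Continuous fun ξ : X => exp (-b' * dist ξ x ^ 2) := by fun_prop
  refine (hint.norm.const_mul (exp (2 * b * dist x y ^ 2))).mono'
    (hcont.measurable.aestronglyMeasurable.smul hf) (.of_forall fun ξ => ?_)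
  rw [norm_smul, norm_smul, Real.norm_of_nonneg (exp_nonneg _), Real.norm_of_nonneg (exp_nonneg _),
    ← mul_assoc]
  gcongr
  calc exp (-b' * dist ξ x ^ 2) ≤ exp (-(2 * b) * dist ξ x ^ 2) := by gcongr
    _ ≤ _ := exp_neg_mul_dist_sq_le hb x y ξ

lemma norm_setIntegral_ball_le_exp_mul (hb : 0 ≤ b) {y : X}
    (hint : Integrable (fun ξ => exp (-b * dist ξ y ^ 2) • f ξ) ν) (x : X) (r : ℝ) :
    ‖∫ ξ in ball x r, f ξ ∂ν‖ ≤
      exp (2 * b * (r ^ 2 + dist x y ^ 2)) * ∫ ξ, ‖exp (-b * dist ξ y ^ 2) • f ξ‖ ∂ν := by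
  set A := exp (2 * b * (r ^ 2 + dist x y ^ 2))
  have hweight (ξ : X) (hξ : ξ ∈ ball x r) : 1 ≤ A * exp (-b * dist ξ y ^ 2) := by
    have hr : dist ξ x ^ 2 ≤ r ^ 2 := pow_le_pow_left₀ dist_nonneg (mem_ball.1 hξ).le 2
    calc 1 = exp (2 * b * dist ξ x ^ 2) * exp (-(2 * b) * dist ξ x ^ 2) := by
          rw [← exp_add, neg_mul, add_neg_cancel, exp_zero]
      _ ≤ exp (2 * b * r ^ 2) * (exp (2 * b * dist x y ^ 2) * exp (-b * dist ξ y ^ 2)) := by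
          gcongr ?_ * ?_
          · gcongr
          · exact exp_neg_mul_dist_sq_le hb x y ξ
      _ = A * exp (-b * dist ξ y ^ 2) := by rw [← mul_assoc, ← exp_add, ← mul_add]
  calc ‖∫ ξ in ball x r, f ξ ∂ν‖
      ≤ ∫ ξ in ball x r, A * ‖exp (-b * dist ξ y ^ 2) • f ξ‖ ∂ν := by
        refine norm_integral_le_of_norm_le (hint.norm.const_mul A).integrableOn
          (ae_restrict_of_forall_mem measurableSet_ball fun ξ hξ => ?_)
        rw [norm_smul, Real.norm_of_nonneg (exp_nonneg _), ← mul_assoc]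
        exact le_mul_of_one_le_left (norm_nonneg _) (hweight ξ hξ)
    _ ≤ ∫ ξ, A * ‖exp (-b * dist ξ y ^ 2) • f ξ‖ ∂ν :=
        setIntegral_le_integral (hint.norm.const_mul A) (.of_forall fun _ => by positivity)
    _ = A * ∫ ξ, ‖exp (-b * dist ξ y ^ 2) • f ξ‖ ∂ν := integral_const_mul _ _

end GaussianWeights

lemma integrable_exp_neg_mul_norm_sq {V : Type*} [NormedAddCommGroup V] [InnerProductSpace ℝ V]
    [FiniteDimensional ℝ V] [MeasurableSpace V] [BorelSpace V] {b : ℝ} (hb : 0 < b) :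
    Integrable fun v : V => exp (-b * ‖v‖ ^ 2) := by
  refine .of_integral_ne_zero ?_
  rw [GaussianFourier.integral_rexp_neg_mul_sq_norm hb]
  positivity

open Polynomial in
lemma integrable_eval_mul_exp_neg_mul_sq (p : ℝ[X]) {b : ℝ} (hb : 0 < b) :
    Integrable fun s : ℝ => p.eval s * exp (-b * s ^ 2) := by
  induction p using Polynomial.induction_on' with
  | add p q hp hq => simpa only [eval_add, add_mul] using hp.fun_add hq
  | monomial m a =>
    have hm := integrable_rpow_mul_exp_neg_mul_sq hb (s := m) (by linarith [m.cast_nonneg (α := ℝ)])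
    simpa only [eval_monomial, rpow_natCast, mul_assoc] using hm.const_mul a

section HeatKernel

variable {n : ℕ} {ν : Measure (Eu n)} {f : Eu n → ℂ} {x : Eu n} {t : ℝ}

/-- The density `k` of the scales `s` in the decomposition
`W(y, t) = t^{-n/2} ∫ s in (‖y‖/√t, ∞), k s` of the heat kernel into indicators of balls. -/
def heatDensity (n : ℕ) (s : ℝ) : ℝ :=
  (4 * π) ^ (-(n : ℝ) / 2) * (s / 2 * exp (-s ^ 2 / 4))

lemma heatDensity_nonneg (n : ℕ) {s : ℝ} (hs : 0 ≤ s) : 0 ≤ heatDensity n s := by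
  unfold heatDensity; positivity

lemma continuous_heatDensity (n : ℕ) : Continuous (heatDensity n) := by
  unfold heatDensity; fun_prop

lemma hasDerivAt_neg_exp_neg_sq_div_four (s : ℝ) :
    HasDerivAt (fun s : ℝ => -exp (-s ^ 2 / 4)) (s / 2 * exp (-s ^ 2 / 4)) s := by
  convert! ((hasDerivAt_pow 2 s).neg.div_const 4).exp.neg using 1
  simp only [Pi.neg_apply]
  ring

lemma tendsto_neg_exp_neg_sq_div_four_atTop :
    Tendsto (fun s : ℝ => -exp (-s ^ 2 / 4)) atTop (𝓝 0) := by
  have hsq : Tendsto (fun s : ℝ => -s ^ 2 / 4) atTop atBot :=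
    (tendsto_neg_atTop_atBot.comp (tendsto_pow_atTop two_ne_zero)).atBot_div_const (by norm_num)
  simpa only [neg_zero, Function.comp_def] using (tendsto_exp_atBot.comp hsq).neg

lemma integrableOn_heatDensity (n : ℕ) : IntegrableOn (heatDensity n) (Set.Ioi 0) :=
  (integrableOn_Ioi_deriv_of_nonneg' (fun s _ => hasDerivAt_neg_exp_neg_sq_div_four s)
    (fun s (hs : 0 < s) => by positivity) tendsto_neg_exp_neg_sq_div_four_atTop).const_mul _

lemma integral_Ioi_heatDensity (n : ℕ) {a : ℝ} (ha : 0 ≤ a) :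
    ∫ s in Set.Ioi a, heatDensity n s = (4 * π) ^ (-(n : ℝ) / 2) * exp (-a ^ 2 / 4) := by
  have hpos (s : ℝ) (hs : s ∈ Set.Ioi a) : 0 ≤ s / 2 * exp (-s ^ 2 / 4) := by
    have : 0 ≤ s := ha.trans (le_of_lt hs)
    positivity
  simp only [heatDensity]
  rw [integral_const_mul,
    integral_Ioi_of_hasDerivAt_of_nonneg' (fun s _ => hasDerivAt_neg_exp_neg_sq_div_four s) hpos
      tendsto_neg_exp_neg_sq_div_four_atTop, zero_sub, neg_neg]

lemma continuous_heatKer_sub (x : Eu n) (t : ℝ) : Continuous fun ξ => heatKer n (x - ξ) t := by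
  unfold heatKer; fun_prop

lemma heatKer_nonneg (y : Eu n) (ht : 0 < t) : 0 ≤ heatKer n y t := by
  unfold heatKer; positivity

lemma heatKer_eq_mul_exp (y : Eu n) (t : ℝ) :
    heatKer n y t = (4 * π * t) ^ (-(n : ℝ) / 2) * exp (-(1 / (4 * t)) * ‖y‖ ^ 2) := by
  unfold heatKer; ring_nf

lemma heatKer_eq_integral_heatDensity (y : Eu n) (ht : 0 < t) :
    heatKer n y t = (√t ^ n)⁻¹ * ∫ s in Set.Ioi (‖y‖ / √t), heatDensity n s := by
  have hpow : t ^ (-(n : ℝ) / 2) = (√t ^ n)⁻¹ := by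
    rw [sqrt_eq_rpow, ← rpow_natCast, ← rpow_mul ht.le, ← rpow_neg ht.le]
    ring_nf
  have hexp : -‖y‖ ^ 2 / (4 * t) = -(‖y‖ ^ 2 / t) / 4 := by field_simp
  rw [integral_Ioi_heatDensity n (by positivity), heatKer, mul_rpow (by positivity) ht.le, hpow,
    div_pow, sq_sqrt ht.le, hexp]
  ring

lemma integral_heatKer_sub (x : Eu n) (ht : 0 < t) : ∫ ξ, heatKer n (x - ξ) t = 1 := by
  rw [integral_sub_left_eq_self (heatKer n · t) volume x]
  simp only [heatKer_eq_mul_exp]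
  rw [integral_const_mul, GaussianFourier.integral_rexp_neg_mul_sq_norm (by positivity),
    finrank_euclideanSpace_fin, div_div_eq_mul_div, div_one, mul_comm π (4 * t), mul_right_comm,
    ← rpow_add (by positivity), ← add_div, neg_add_cancel, zero_div, rpow_zero]

lemma integrable_heatKer_smul_iff (ht : 0 < t) :
    Integrable (fun ξ => heatKer n (x - ξ) t • f ξ) ν ↔
      Integrable (fun ξ => exp (-(1 / (4 * t)) * dist ξ x ^ 2) • f ξ) ν := by
  have hne : (4 * π * t) ^ (-(n : ℝ) / 2) ≠ 0 := by positivity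
  simp only [heatKer_eq_mul_exp, mul_smul, dist_comm _ x, dist_eq_norm]
  exact integrable_smul_iff hne _

lemma integrable_heatKer_smul_of_two_mul_le {t₀ : ℝ} (ht : 0 < t) (htt₀ : 2 * t ≤ t₀) {x₁ : Eu n}
    (hf : AEStronglyMeasurable f ν)
    (hint : Integrable (fun ξ => heatKer n (x₁ - ξ) t₀ • f ξ) ν) (x : Eu n) :
    Integrable (fun ξ => heatKer n (x - ξ) t • f ξ) ν := by
  have ht₀ : 0 < t₀ := by linarith
  have hrate : 2 * (1 / (4 * t₀)) ≤ 1 / (4 * t) := by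
    rw [mul_one_div, div_le_div_iff₀ (by positivity) (by positivity)]
    linarith
  exact (integrable_heatKer_smul_iff ht).2 (integrable_exp_neg_mul_dist_sq_smul (by positivity)
    hrate hf ((integrable_heatKer_smul_iff ht₀).1 hint) x)

lemma integrable_heatKer_smul_of_lintegral_lt_top (ht : 0 < t) (hf : AEStronglyMeasurable f ν)
    (hf1 : ∀ ξ, ‖f ξ‖ = 1) (hfin : ∫⁻ ξ, ENNReal.ofReal (heatKer n (x - ξ) t) ∂ν < ⊤) :
    Integrable (fun ξ => heatKer n (x - ξ) t • f ξ) ν := by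
  refine ⟨(continuous_heatKer_sub x t).aestronglyMeasurable.smul hf, ?_⟩
  rw [hasFiniteIntegral_iff_norm]
  simpa only [norm_smul, hf1, mul_one, Real.norm_of_nonneg (heatKer_nonneg _ ht)] using hfin

lemma heatInt_eq_integral_smul (ν : Measure (Eu n)) (f : Eu n → ℂ) (x : Eu n) (t : ℝ) :
    heatInt n ν f x t = ∫ ξ, heatKer n (x - ξ) t • f ξ ∂ν := by
  simp only [heatInt, Complex.real_smul]

lemma integrable_heatKer_smul_const (L : ℂ) (x : Eu n) (ht : 0 < t) :
    Integrable fun ξ => heatKer n (x - ξ) t • L :=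
  (integrable_of_integral_eq_one (integral_heatKer_sub x ht)).smul_const L

lemma heatInt_volume_const (L : ℂ) (x : Eu n) (ht : 0 < t) :
    heatInt n volume (fun _ => L) x t = L := by
  rw [heatInt_eq_integral_smul, integral_smul_const, integral_heatKer_sub x ht, one_smul]

lemma heatKer_sub_smul_eq (ht : 0 < t) (ξ : Eu n) :
    heatKer n (x - ξ) t • f ξ =
      (√t ^ n)⁻¹ • (∫ s in Set.Ioi (dist ξ x / √t), heatDensity n s) • f ξ := by
  rw [heatKer_eq_integral_heatDensity _ ht, mul_smul, ← dist_eq_norm, dist_comm]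

lemma integrable_integral_heatDensity_smul (ht : 0 < t)
    (hint : Integrable (fun ξ => heatKer n (x - ξ) t • f ξ) ν) :
    Integrable (fun ξ => (∫ s in Set.Ioi (dist ξ x / √t), heatDensity n s) • f ξ) ν := by
  have hne : (√t ^ n)⁻¹ ≠ 0 := by positivity
  simp only [heatKer_sub_smul_eq ht] at hint
  exact (integrable_smul_iff hne _).1 hint

lemma integrableOn_heatDensity_smul_setIntegral_ball [SFinite ν] (ht : 0 < t)
    (hf : AEStronglyMeasurable f ν) (hint : Integrable (fun ξ => heatKer n (x - ξ) t • f ξ) ν) :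
    IntegrableOn (fun s => heatDensity n s • ∫ ξ in ball x (√t * s), f ξ ∂ν) (Set.Ioi 0) :=
  integrableOn_smul_setIntegral_ball (sqrt_pos.2 ht) (continuous_heatDensity n).measurable
    (fun _ => heatDensity_nonneg n) (integrableOn_heatDensity n) hf
    (integrable_integral_heatDensity_smul ht hint)

lemma heatInt_eq_integral_setIntegral_ball [SFinite ν] (ht : 0 < t)
    (hf : AEStronglyMeasurable f ν) (hint : Integrable (fun ξ => heatKer n (x - ξ) t • f ξ) ν) :
    heatInt n ν f x t =
      (√t ^ n)⁻¹ • ∫ s in Set.Ioi 0, heatDensity n s • ∫ ξ in ball x (√t * s), f ξ ∂ν := by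
  simp only [heatInt_eq_integral_smul, heatKer_sub_smul_eq ht]
  rw [integral_smul, integral_radial_smul_eq_integral_setIntegral_ball (sqrt_pos.2 ht)
    (continuous_heatDensity n).measurable (fun _ => heatDensity_nonneg n)
    (integrableOn_heatDensity n) hf (integrable_integral_heatDensity_smul ht hint)]

end HeatKernel

section Discrepancy

variable {n : ℕ} {ν : Measure (Eu n)} {f : Eu n → ℂ} {x x₀ : Eu n} {L : ℂ} {t : ℝ}

/-- The discrepancy `(μ - L m)(B(x, r))` of the measure `dμ = f dν` from the multiple `L m` of
Lebesgue measure on a ball; the σ-point condition bounds it. -/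
def ballDiscrepancy (ν : Measure (Eu n)) (f : Eu n → ℂ) (L : ℂ) (x : Eu n) (r : ℝ) : ℂ :=
  (∫ ξ in ball x r, f ξ ∂ν) - ∫ _ in ball x r, L

lemma ballDiscrepancy_eq_sub_mul_volume (ν : Measure (Eu n)) (f : Eu n → ℂ) (L : ℂ) (x : Eu n)
    (r : ℝ) :
    ballDiscrepancy ν f L x r =
      (∫ ξ in ball x r, f ξ ∂ν) - L * ((volume (ball x r)).toReal : ℂ) := by
  rw [ballDiscrepancy, setIntegral_const, Complex.real_smul, mul_comm, measureReal_def]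

lemma aestronglyMeasurable_ballDiscrepancy [SFinite ν] {μ : Measure ℝ}
    (hf : AEStronglyMeasurable f ν) (L : ℂ) (x : Eu n) (c : ℝ) :
    AEStronglyMeasurable (fun s => ballDiscrepancy ν f L x (c * s)) μ :=
  (aestronglyMeasurable_setIntegral_ball hf).sub
    (aestronglyMeasurable_setIntegral_ball aestronglyMeasurable_const)

lemma heatInt_sub_eq_integral_ballDiscrepancy [SFinite ν] (ht : 0 < t)
    (hf : AEStronglyMeasurable f ν) (hint : Integrable (fun ξ => heatKer n (x - ξ) t • f ξ) ν)
    (L : ℂ) :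
    heatInt n ν f x t - L =
      (√t ^ n)⁻¹ • ∫ s in Set.Ioi 0, heatDensity n s • ballDiscrepancy ν f L x (√t * s) := by
  have hL := integrable_heatKer_smul_const L x ht
  calc heatInt n ν f x t - L = heatInt n ν f x t - heatInt n volume (fun _ => L) x t := by
        rw [heatInt_volume_const L x ht]
    _ = _ := by
        rw [heatInt_eq_integral_setIntegral_ball ht hf hint,
          heatInt_eq_integral_setIntegral_ball ht aestronglyMeasurable_const hL, ← smul_sub,
          ← integral_sub (integrableOn_heatDensity_smul_setIntegral_ball ht hf hint)
            (integrableOn_heatDensity_smul_setIntegral_ball ht aestronglyMeasurable_const hL)]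
        simp only [ballDiscrepancy, smul_sub]

lemma norm_ballDiscrepancy_le_exp_mul {b : ℝ} (hb : 0 < b)
    (hint : Integrable (fun ξ => exp (-b * dist ξ x₀ ^ 2) • f ξ) ν) (L : ℂ) (x : Eu n) (r : ℝ) :
    ‖ballDiscrepancy ν f L x r‖ ≤ exp (2 * b * (r ^ 2 + dist x x₀ ^ 2)) *
      ((∫ ξ, ‖exp (-b * dist ξ x₀ ^ 2) • f ξ‖ ∂ν) + ∫ ξ, ‖exp (-b * dist ξ x₀ ^ 2) • L‖) := by
  have hL : Integrable fun ξ => exp (-b * dist ξ x₀ ^ 2) • L := by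
    simp only [dist_eq_norm]
    exact ((integrable_exp_neg_mul_norm_sq hb).comp_sub_right x₀).smul_const L
  rw [mul_add]
  exact norm_sub_le_of_le (norm_setIntegral_ball_le_exp_mul hb.le hint x r)
    (norm_setIntegral_ball_le_exp_mul hb.le hL x r)

lemma IsSigmaPt.isLittleO_ballDiscrepancy (hσ : IsSigmaPt n ν f x₀ L) :
    (fun p : Eu n × ℝ => ballDiscrepancy ν f L p.1 p.2) =o[𝓝 x₀ ×ˢ 𝓝[>] 0]
      fun p => (dist p.1 x₀ + p.2) ^ n := by
  refine Asymptotics.isLittleO_iff.2 fun ε hε => ?_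
  obtain ⟨δ, hδ, hbound⟩ := hσ ε hε
  filter_upwards [prod_mem_prod (ball_mem_nhds x₀ hδ) (Ioo_mem_nhdsGT hδ)] with p ⟨hx, hr, hrδ⟩
  rw [ballDiscrepancy_eq_sub_mul_volume, Real.norm_of_nonneg (by positivity)]
  exact (hbound p.1 p.2 hr hx hrδ).le

lemma IsSigmaPt.exists_norm_ballDiscrepancy_le (hσ : IsSigmaPt n ν f x₀ L) {b : ℝ} (hb : 0 < b)
    (hint : Integrable (fun ξ => exp (-b * dist ξ x₀ ^ 2) • f ξ) ν) :
    ∃ C, 0 ≤ C ∧ ∀ᶠ x in 𝓝 x₀, ∀ r, 0 < r →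
      ‖ballDiscrepancy ν f L x r‖ ≤ C * (dist x x₀ + r) ^ n * exp (2 * b * r ^ 2) := by
  obtain ⟨δ, hδ, hsmall⟩ := hσ 1 one_pos
  set M := (∫ ξ, ‖exp (-b * dist ξ x₀ ^ 2) • f ξ‖ ∂ν) + ∫ ξ, ‖exp (-b * dist ξ x₀ ^ 2) • L‖
  have : 0 ≤ M := by positivity
  refine ⟨1 + exp (2 * b * δ ^ 2) * M / δ ^ n, by positivity, ?_⟩
  filter_upwards [ball_mem_nhds x₀ hδ] with x hx r hr
  rw [mem_ball] at hx
  have hexp : 1 ≤ exp (2 * b * r ^ 2) := one_le_exp (by positivity)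
  rcases lt_or_ge r δ with hrδ | hrδ
  · calc ‖ballDiscrepancy ν f L x r‖ ≤ 1 * (dist x x₀ + r) ^ n * 1 := by
          rw [ballDiscrepancy_eq_sub_mul_volume, mul_one]
          exact (hsmall x r hr hx hrδ).le
      _ ≤ _ := by
          gcongr
          exact le_add_of_nonneg_right (by positivity)
  · calc ‖ballDiscrepancy ν f L x r‖ ≤ exp (2 * b * (r ^ 2 + dist x x₀ ^ 2)) * M :=
          norm_ballDiscrepancy_le_exp_mul hb hint L x r
      _ ≤ exp (2 * b * (r ^ 2 + δ ^ 2)) * M := by gcongr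
      _ = exp (2 * b * δ ^ 2) * M / δ ^ n * δ ^ n * exp (2 * b * r ^ 2) := by
          rw [mul_add (2 * b), exp_add]
          field_simp
      _ ≤ _ := by
          gcongr
          · exact le_add_of_nonneg_left zero_le_one
          · exact hrδ.trans (le_add_of_nonneg_left dist_nonneg)

end Discrepancy

section ParabolicLimit

/-- The parabolic approach region `‖x - x₀‖ < α √t` at `x₀`, which near `(x₀, 0)` contains the
nontangential cone `‖x - x₀‖ < α t`. -/
def parabolicRegion {X : Type*} [PseudoMetricSpace X] (x₀ : X) (α : ℝ) : Set (X × ℝ) :=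
  {p | 0 < p.2 ∧ dist p.1 x₀ < α * √p.2}

section Region

variable {X : Type*} [PseudoMetricSpace X] {x₀ : X} {α : ℝ}

lemma nhdsWithin_cone_le_nhdsWithin_parabolicRegion :
    𝓝[{p : X × ℝ | 0 < p.2 ∧ dist p.1 x₀ < α * p.2}] (x₀, 0) ≤
      𝓝[parabolicRegion x₀ α] (x₀, 0) := by
  refine nhdsWithin_le_iff.2 ?_
  have hsmall : ∀ᶠ p : X × ℝ in 𝓝 (x₀, 0), p.2 < 1 :=
    continuous_snd.continuousAt.eventually_lt continuousAt_const one_pos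
  filter_upwards [self_mem_nhdsWithin, mem_nhdsWithin_of_mem_nhds hsmall] with p ⟨ht, hx⟩ ht1
  have hα : 0 < α := pos_of_mul_pos_left (dist_nonneg.trans_lt hx) ht.le
  exact ⟨ht, hx.trans_le (by gcongr; exact le_sqrt_self_iff.2 ht1.le)⟩

lemma dist_add_sqrt_mul_le_of_mem_parabolicRegion {p : X × ℝ} (hp : p ∈ parabolicRegion x₀ α)
    (s : ℝ) : dist p.1 x₀ + √p.2 * s ≤ √p.2 * (α + s) := by
  linarith [hp.2]

lemma tendsto_fst_sqrt_snd_mul_parabolicRegion {s : ℝ} (hs : 0 < s) :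
    Tendsto (fun p : X × ℝ => (p.1, √p.2 * s)) (𝓝[parabolicRegion x₀ α] (x₀, 0))
      (𝓝 x₀ ×ˢ 𝓝[>] 0) := by
  have hcont : Continuous fun p : X × ℝ => √p.2 * s := by fun_prop
  refine (continuous_fst.continuousWithinAt).tendsto.prodMk (tendsto_nhdsWithin_iff.2 ⟨?_, ?_⟩)
  · simpa only [sqrt_zero, zero_mul] using (hcont.tendsto (x₀, 0)).mono_left nhdsWithin_le_nhds
  · filter_upwards [self_mem_nhdsWithin] with p hp
    exact mul_pos (sqrt_pos.2 hp.1) hs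

end Region

variable {n : ℕ} {ν : Measure (Eu n)} {f : Eu n → ℂ} {x₀ : Eu n} {L : ℂ}

lemma IsSigmaPt.tendsto_rescaled_ballDiscrepancy (hσ : IsSigmaPt n ν f x₀ L) (α : ℝ) {s : ℝ}
    (hs : 0 < s) :
    Tendsto (fun p : Eu n × ℝ => (√p.2 ^ n)⁻¹ • ballDiscrepancy ν f L p.1 (√p.2 * s))
      (𝓝[parabolicRegion x₀ α] (x₀, 0)) (𝓝 0) := by
  have hscale : (fun p : Eu n × ℝ => (dist p.1 x₀ + √p.2 * s) ^ n)
      =O[𝓝[parabolicRegion x₀ α] (x₀, 0)] fun p => √p.2 ^ n := by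
    refine .of_bound ((α + s) ^ n) ?_
    filter_upwards [self_mem_nhdsWithin] with p hp
    rw [Real.norm_of_nonneg (by positivity), Real.norm_of_nonneg (by positivity), ← mul_pow,
      mul_comm (α + s)]
    gcongr
    exact dist_add_sqrt_mul_le_of_mem_parabolicRegion hp s
  exact ((hσ.isLittleO_ballDiscrepancy.comp_tendsto
    (tendsto_fst_sqrt_snd_mul_parabolicRegion hs)).trans_isBigO hscale).tendsto_inv_smul_nhds_zero

lemma IsSigmaPt.exists_norm_rescaled_ballDiscrepancy_le (hσ : IsSigmaPt n ν f x₀ L) {b : ℝ}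
    (hb : 0 < b) (hint : Integrable (fun ξ => exp (-b * dist ξ x₀ ^ 2) • f ξ) ν) (α : ℝ) :
    ∃ C, ∀ᶠ p : Eu n × ℝ in 𝓝[parabolicRegion x₀ α] (x₀, 0), ∀ s, 0 < s →
      ‖(√p.2 ^ n)⁻¹ • ballDiscrepancy ν f L p.1 (√p.2 * s)‖ ≤
        C * (α + s) ^ n * exp (s ^ 2 / 8) := by
  obtain ⟨C, hC, hbound⟩ := hσ.exists_norm_ballDiscrepancy_le hb hint
  have hx : ∀ᶠ p : Eu n × ℝ in 𝓝 (x₀, 0), ∀ r, 0 < r →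
      ‖ballDiscrepancy ν f L p.1 r‖ ≤ C * (dist p.1 x₀ + r) ^ n * exp (2 * b * r ^ 2) :=
    (continuous_fst.tendsto (x₀, (0 : ℝ))).eventually hbound
  have ht : ∀ᶠ p : Eu n × ℝ in 𝓝 (x₀, 0), 2 * b * p.2 < 1 / 8 :=
    (by fun_prop : Continuous fun p : Eu n × ℝ => 2 * b * p.2).continuousAt.eventually_lt
      continuousAt_const (by norm_num)
  refine ⟨C, ?_⟩
  filter_upwards [self_mem_nhdsWithin, mem_nhdsWithin_of_mem_nhds hx,
    mem_nhdsWithin_of_mem_nhds ht] with p hp hpx hpt s hs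
  have hsqrt : 0 < √p.2 := sqrt_pos.2 hp.1
  have hexp : 2 * b * (√p.2 * s) ^ 2 ≤ s ^ 2 / 8 := by
    rw [mul_pow, sq_sqrt hp.1.le]
    nlinarith [sq_nonneg s]
  rw [norm_smul, Real.norm_of_nonneg (by positivity), inv_mul_le_iff₀ (by positivity)]
  have hscale := dist_add_sqrt_mul_le_of_mem_parabolicRegion hp s
  have hnonneg : 0 ≤ √p.2 * (α + s) :=
    (by positivity : 0 ≤ dist p.1 x₀ + √p.2 * s).trans hscale
  calc ‖ballDiscrepancy ν f L p.1 (√p.2 * s)‖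
      ≤ C * (dist p.1 x₀ + √p.2 * s) ^ n * exp (2 * b * (√p.2 * s) ^ 2) := hpx _ (by positivity)
    _ ≤ C * (√p.2 * (α + s)) ^ n * exp (s ^ 2 / 8) := by gcongr
    _ = √p.2 ^ n * (C * (α + s) ^ n * exp (s ^ 2 / 8)) := by
        rw [mul_pow]
        ring

open Polynomial in
lemma integrableOn_heatDensity_mul_pow_mul_exp (n : ℕ) (C α : ℝ) :
    IntegrableOn (fun s => heatDensity n s * (C * (α + s) ^ n * exp (s ^ 2 / 8))) (Set.Ioi 0) := by
  have hpoly := (integrable_eval_mul_exp_neg_mul_sq (X * (Polynomial.C α + X) ^ n)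
    (b := 1 / 8) (by norm_num)).const_mul ((4 * π) ^ (-(n : ℝ) / 2) * C / 2)
  refine (hpoly.congr (.of_forall fun s => ?_)).integrableOn
  have hexp : exp (-(1 / 8) * s ^ 2) = exp (-s ^ 2 / 4) * exp (s ^ 2 / 8) := by
    rw [← exp_add]
    ring_nf
  simp only [heatDensity, hexp, eval_mul, eval_X, eval_pow, eval_add, eval_C]
  ring

theorem IsSigmaPt.tendsto_integral_rescaled_ballDiscrepancy [SFinite ν]
    (hσ : IsSigmaPt n ν f x₀ L) {b : ℝ} (hb : 0 < b) (hf : AEStronglyMeasurable f ν)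
    (hint : Integrable (fun ξ => exp (-b * dist ξ x₀ ^ 2) • f ξ) ν) (α : ℝ) :
    Tendsto (fun p : Eu n × ℝ => (√p.2 ^ n)⁻¹ •
        ∫ s in Set.Ioi 0, heatDensity n s • ballDiscrepancy ν f L p.1 (√p.2 * s))
      (𝓝[parabolicRegion x₀ α] (x₀, 0)) (𝓝 0) := by
  obtain ⟨C, hC⟩ := hσ.exists_norm_rescaled_ballDiscrepancy_le hb hint α
  simp only [← integral_smul]
  rw [← integral_zero ℝ ℂ (μ := volume.restrict (Set.Ioi 0))]
  refine tendsto_integral_filter_of_dominated_convergence _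
    (.of_forall fun p => ?_) ?_ (integrableOn_heatDensity_mul_pow_mul_exp n C α)
    (ae_restrict_of_forall_mem measurableSet_Ioi fun s hs => ?_)
  · exact ((continuous_heatDensity n).aestronglyMeasurable.smul
      (aestronglyMeasurable_ballDiscrepancy hf L p.1 √p.2)).const_smul (√p.2 ^ n)⁻¹
  · filter_upwards [hC] with p hp
    refine ae_restrict_of_forall_mem measurableSet_Ioi fun s hs => ?_
    have hk := heatDensity_nonneg n (le_of_lt hs)
    rw [smul_comm, norm_smul, Real.norm_of_nonneg hk]
    exact mul_le_mul_of_nonneg_left (hp s hs) hk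
  · simp only [smul_comm _ (heatDensity n s)]
    simpa only [smul_zero] using
      (hσ.tendsto_rescaled_ballDiscrepancy α hs).const_smul (heatDensity n s)

theorem stmt2_general [SFinite ν] (hf : AEStronglyMeasurable f ν) {t₀ : ℝ} (ht₀ : 0 < t₀)
    {x₁ : Eu n} (hint : Integrable (fun ξ => heatKer n (x₁ - ξ) t₀ • f ξ) ν)
    (hσ : IsSigmaPt n ν f x₀ L) (α : ℝ) :
    Tendsto (fun p : Eu n × ℝ => heatInt n ν f p.1 p.2) (𝓝[parabolicRegion x₀ α] (x₀, 0))
      (𝓝 L) := by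
  have hkernel : ∀ᶠ p : Eu n × ℝ in 𝓝[parabolicRegion x₀ α] (x₀, 0),
      0 < p.2 ∧ Integrable (fun ξ => heatKer n (p.1 - ξ) p.2 • f ξ) ν := by
    have ht : ∀ᶠ p : Eu n × ℝ in 𝓝 (x₀, 0), p.2 < t₀ / 2 :=
      continuousAt_snd.eventually_lt continuousAt_const (half_pos ht₀)
    filter_upwards [self_mem_nhdsWithin, mem_nhdsWithin_of_mem_nhds ht] with p hp hpt
    exact ⟨hp.1, integrable_heatKer_smul_of_two_mul_le hp.1 (by linarith) hf hint p.1⟩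
  have hgauss := integrable_exp_neg_mul_dist_sq_smul (by positivity) le_rfl hf
    ((integrable_heatKer_smul_iff ht₀).1 hint) x₀
  have hlim := hσ.tendsto_integral_rescaled_ballDiscrepancy (by positivity) hf hgauss α
  refine tendsto_sub_nhds_zero_iff.1 (hlim.congr' ?_)
  filter_upwards [hkernel] with p hp
  exact (heatInt_sub_eq_integral_ballDiscrepancy hp.1 hf hp.2 L).symm

end ParabolicLimit

theorem stmt2 {n : ℕ} (hn : 0 < n)
    (ν : Measure (Eu n)) [IsLocallyFiniteMeasure ν]
    (f : Eu n → ℂ) (hf : Measurable f) (hf1 : ∀ ξ, ‖f ξ‖ = 1)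
    (t₀ : ℝ) (ht₀ : 0 < t₀) (x₁ : Eu n)
    (hfin : ∫⁻ ξ, ENNReal.ofReal (heatKer n (x₁ - ξ) t₀) ∂ν < ⊤)
    (x₀ : Eu n) (L : ℂ) (hσ : IsSigmaPt n ν f x₀ L) :
    NTlim n (fun x t => heatInt n ν f x t) x₀ L := by
  have hint := integrable_heatKer_smul_of_lintegral_lt_top ht₀ hf.aestronglyMeasurable hf1 hfin
  exact fun α _ => (stmt2_general hf.aestronglyMeasurable ht₀ hint hσ α).mono_left
    nhdsWithin_cone_le_nhdsWithin_parabolicRegion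

end
end
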